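/- arXiv:2205.11494 — 3 statements merged into one kernel-verified Lean document; each statement's English description precedes it below -/
import Mathlib

section
/- Let ▷ be a measuring of a Hopf algebra H on an algebra B, and let σ : H⊗H → B be a convolution-invertible linear map with σ(h,1) = σ(1,h) = ε(h)1 and 1▷b = b. Then the product (b⊗h)(c⊗g) := b(h_{(1)}▷c)σ(h_{(2)},g_{(1)}) ⊗ h_{(3)}g_{(2)} on the vector space B⊗H is associative with unit 1⊗1 if and only if the two remaining cocycle-datum axioms hold: h▷(g▷b) = σ(h_{(1)},g_{(1)})((h_{(2)}g_{(2)})▷b)σ⁻¹(h_{(3)},g_{(3)}) and (h_{(1)}▷σ(g_{(1)},f_{(1)}))σ(h_{(2)},g_{(2)}f_{(2)}) = σ(h_{(1)},g_{(1)})σ(h_{(2)}g_{(2)},f) for all h,g,f ∈ H and b ∈ B. -/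
/-!
The proof replaces Sweedler computations by identities in convolution algebras `Hom(C, A)`,
where `C` is `H`, `H ⊗ H` or `H ⊗ (H ⊗ H)` and `A` is `B` or the ordinary tensor product algebra
`B ⊗ H`. Precomposition with coalgebra morphisms (`pb`), postcomposition with algebra morphisms
(`pf`) and, for a measuring, `v ↦ (h ⊗ x ↦ h ▷ v(x))` (`actC`) are all multiplicative.

In this language both associates of `(1 ⊗ h)(c ⊗ g)(d ⊗ f)` have the shape
`(h ▷ c) * X * (1 ⊗ hgf)`, where the middle factor `X` is
`σ(h, g) * (hg ▷ d) * σ(hg, f)` for the left associate (`coreL`) and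
`(h ▷ (g ▷ d)) * (h ▷ σ(g, f)) * σ(h, gf)` for the right one (`coreR`). Setting `c = 1` and
applying `id ⊗ ε` recovers `X`, so associativity is equivalent to `coreL = coreR` for all `d`
(`assoc_iff_core`). At `d = 1` this equality is the cocycle law. Given the cocycle law, the factor
`σ(hg, f)` can be cancelled because `σ` is convolution invertible, and what remains is
`(h ▷ (g ▷ d)) * σ(h, g) = σ(h, g) * (hg ▷ d)`, the twisted action law (`core_iff`).
The unit laws follow from the normalisation of `σ` and `▷` alone (`IsCrossMul.unit`).
-/


open scoped TensorProduct
open Coalgebra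

noncomputable section

section SweedlerDefs

variable (k : Type*) [Field k]
variable (H : Type*) [Ring H] [Bialgebra k H]

/-- Left-nested triple comultiplication `h ↦ (h₍₁₎ ⊗ h₍₂₎) ⊗ h₍₃₎`. -/
def Δ3 : H →ₗ[k] (H ⊗[k] H) ⊗[k] H :=
  (LinearMap.rTensor H (Coalgebra.comul (R := k) (A := H))) ∘ₗ Coalgebra.comul

/-- Left-nested fourfold comultiplication. -/
def Δ4 : H →ₗ[k] ((H ⊗[k] H) ⊗[k] H) ⊗[k] H :=
  (LinearMap.rTensor H (Δ3 k H)) ∘ₗ Coalgebra.comul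

/-- Left-nested fivefold comultiplication. -/
def Δ5 : H →ₗ[k] (((H ⊗[k] H) ⊗[k] H) ⊗[k] H) ⊗[k] H :=
  (LinearMap.rTensor H (Δ4 k H)) ∘ₗ Coalgebra.comul

/-- Left-nested sixfold comultiplication. -/
def Δ6 : H →ₗ[k] ((((H ⊗[k] H) ⊗[k] H) ⊗[k] H) ⊗[k] H) ⊗[k] H :=
  (LinearMap.rTensor H (Δ5 k H)) ∘ₗ Coalgebra.comul

/-- `IsRep2 k H h h1 h2` says that `Δh = ∑ᵢ h1 i ⊗ h2 i`, i.e. the families `h1, h2`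
realise the Sweedler legs `h₍₁₎ ⊗ h₍₂₎`. -/
def IsRep2 {n : ℕ} (h : H) (h1 h2 : Fin n → H) : Prop :=
  Coalgebra.comul (R := k) h = ∑ i, h1 i ⊗ₜ[k] h2 i

/-- A representation of the Sweedler legs `h₍₁₎ ⊗ h₍₂₎ ⊗ h₍₃₎`. -/
def IsRep3 {n : ℕ} (h : H) (h1 h2 h3 : Fin n → H) : Prop :=
  Δ3 k H h = ∑ i, (h1 i ⊗ₜ[k] h2 i) ⊗ₜ[k] h3 i

/-- A representation of the Sweedler legs `h₍₁₎ ⊗ h₍₂₎ ⊗ h₍₃₎ ⊗ h₍₄₎`. -/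
def IsRep4 {n : ℕ} (h : H) (h1 h2 h3 h4 : Fin n → H) : Prop :=
  Δ4 k H h = ∑ i, ((h1 i ⊗ₜ[k] h2 i) ⊗ₜ[k] h3 i) ⊗ₜ[k] h4 i

/-- A representation of the Sweedler legs `h₍₁₎ ⊗ ⋯ ⊗ h₍₅₎`. -/
def IsRep5 {n : ℕ} (h : H) (h1 h2 h3 h4 h5 : Fin n → H) : Prop :=
  Δ5 k H h = ∑ i, (((h1 i ⊗ₜ[k] h2 i) ⊗ₜ[k] h3 i) ⊗ₜ[k] h4 i) ⊗ₜ[k] h5 i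

/-- A representation of the Sweedler legs `h₍₁₎ ⊗ ⋯ ⊗ h₍₆₎`. -/
def IsRep6 {n : ℕ} (h : H) (h1 h2 h3 h4 h5 h6 : Fin n → H) : Prop :=
  Δ6 k H h = ∑ i, ((((h1 i ⊗ₜ[k] h2 i) ⊗ₜ[k] h3 i) ⊗ₜ[k] h4 i) ⊗ₜ[k] h5 i) ⊗ₜ[k] h6 i

/-- A Drinfeld 2-cocycle `χ : H ⊗ H → k` with convolution inverse `χi`. -/
structure DrinfeldCocycle (χ χi : H →ₗ[k] H →ₗ[k] k) : Prop where
  conv_left : ∀ (h g : H) {n m : ℕ} (h1 h2 : Fin n → H) (g1 g2 : Fin m → H),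
    IsRep2 k H h h1 h2 → IsRep2 k H g g1 g2 →
    ∑ i, ∑ j, χ (h1 i) (g1 j) * χi (h2 i) (g2 j)
      = Coalgebra.counit (R := k) h * Coalgebra.counit (R := k) g
  conv_right : ∀ (h g : H) {n m : ℕ} (h1 h2 : Fin n → H) (g1 g2 : Fin m → H),
    IsRep2 k H h h1 h2 → IsRep2 k H g g1 g2 →
    ∑ i, ∑ j, χi (h1 i) (g1 j) * χ (h2 i) (g2 j)
      = Coalgebra.counit (R := k) h * Coalgebra.counit (R := k) g
  cocycle : ∀ (h g f : H) {n m p : ℕ} (h1 h2 : Fin n → H) (g1 g2 : Fin m → H)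
      (f1 f2 : Fin p → H),
    IsRep2 k H h h1 h2 → IsRep2 k H g g1 g2 → IsRep2 k H f f1 f2 →
    ∑ j, ∑ l, χ (g1 j) (f1 l) * χ h (g2 j * f2 l)
      = ∑ i, ∑ j, χ (h1 i) (g1 j) * χ (h2 i * g2 j) f
  one_cocy : ∀ h : H, χ 1 h = Coalgebra.counit (R := k) h
  cocy_one : ∀ h : H, χ h 1 = Coalgebra.counit (R := k) h

/-- The twisted product `h • g = χ(h₍₁₎,g₍₁₎) h₍₂₎g₍₂₎ χ⁻¹(h₍₃₎,g₍₃₎)` of the Drinfeld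
cotwist `H^χ`, given as a bilinear map `tmul`. -/
def IsTwistedMul (χ χi : H →ₗ[k] H →ₗ[k] k) (tmul : H →ₗ[k] H →ₗ[k] H) : Prop :=
  ∀ (h g : H) {n m : ℕ} (h1 h2 h3 : Fin n → H) (g1 g2 g3 : Fin m → H),
    IsRep3 k H h h1 h2 h3 → IsRep3 k H g g1 g2 g3 →
    tmul h g = ∑ i, ∑ j, (χ (h1 i) (g1 j) * χi (h3 i) (g3 j)) • (h2 i * g2 j)

/-- A coquasitriangular structure `r` on `H`, with convolution inverse `ri`. -/
structure Coquasitriangular (r ri : H →ₗ[k] H →ₗ[k] k) : Prop where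
  conv_left : ∀ (h g : H) {n m : ℕ} (h1 h2 : Fin n → H) (g1 g2 : Fin m → H),
    IsRep2 k H h h1 h2 → IsRep2 k H g g1 g2 →
    ∑ i, ∑ j, r (h1 i) (g1 j) * ri (h2 i) (g2 j)
      = Coalgebra.counit (R := k) h * Coalgebra.counit (R := k) g
  conv_right : ∀ (h g : H) {n m : ℕ} (h1 h2 : Fin n → H) (g1 g2 : Fin m → H),
    IsRep2 k H h h1 h2 → IsRep2 k H g g1 g2 →
    ∑ i, ∑ j, ri (h1 i) (g1 j) * r (h2 i) (g2 j)
      = Coalgebra.counit (R := k) h * Coalgebra.counit (R := k) g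
  braid : ∀ (h g : H) {n m : ℕ} (h1 h2 : Fin n → H) (g1 g2 : Fin m → H),
    IsRep2 k H h h1 h2 → IsRep2 k H g g1 g2 →
    ∑ i, ∑ j, r (h2 i) (g2 j) • (g1 j * h1 i) = ∑ i, ∑ j, r (h1 i) (g1 j) • (h2 i * g2 j)
  mul_right : ∀ (h g f : H) {n : ℕ} (h1 h2 : Fin n → H), IsRep2 k H h h1 h2 →
    r h (g * f) = ∑ i, r (h1 i) g * r (h2 i) f
  mul_left : ∀ (h g f : H) {n : ℕ} (f1 f2 : Fin n → H), IsRep2 k H f f1 f2 →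
    r (h * g) f = ∑ i, r h (f1 i) * r g (f2 i)

variable (B : Type*) [Ring B] [Algebra k B]

/-- `u, ui : H → B` are convolution inverses of each other. -/
def ConvInv (u ui : H →ₗ[k] B) : Prop :=
  ∀ (h : H) {n : ℕ} (h1 h2 : Fin n → H), IsRep2 k H h h1 h2 →
    ∑ i, u (h1 i) * ui (h2 i) = Coalgebra.counit (R := k) h • (1 : B)
    ∧ ∑ i, ui (h1 i) * u (h2 i) = Coalgebra.counit (R := k) h • (1 : B)

/-- A measuring of `H` on `B`:  `h ▷ (ab) = (h₍₁₎ ▷ a)(h₍₂₎ ▷ b)` and `h ▷ 1 = ε(h)1`. -/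
structure Measuring (act : H →ₗ[k] B →ₗ[k] B) : Prop where
  act_mul : ∀ (h : H) (a b : B) {n : ℕ} (h1 h2 : Fin n → H),
    IsRep2 k H h h1 h2 → act h (a * b) = ∑ i, act (h1 i) a * act (h2 i) b
  act_one : ∀ h : H, act h 1 = Coalgebra.counit (R := k) h • (1 : B)

/-- A cocycle datum `(▷, σ)` (with chosen convolution inverse `σi` of `σ`). -/
structure CocycleDatum (act : H →ₗ[k] B →ₗ[k] B) (σ σi : H →ₗ[k] H →ₗ[k] B) : Prop where
  toMeasuring : Measuring k H B act
  conv_left : ∀ (h g : H) {n m : ℕ} (h1 h2 : Fin n → H) (g1 g2 : Fin m → H),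
    IsRep2 k H h h1 h2 → IsRep2 k H g g1 g2 →
    ∑ i, ∑ j, σ (h1 i) (g1 j) * σi (h2 i) (g2 j)
      = (Coalgebra.counit (R := k) h * Coalgebra.counit (R := k) g) • (1 : B)
  conv_right : ∀ (h g : H) {n m : ℕ} (h1 h2 : Fin n → H) (g1 g2 : Fin m → H),
    IsRep2 k H h h1 h2 → IsRep2 k H g g1 g2 →
    ∑ i, ∑ j, σi (h1 i) (g1 j) * σ (h2 i) (g2 j)
      = (Coalgebra.counit (R := k) h * Coalgebra.counit (R := k) g) • (1 : B)
  one_act : ∀ b : B, act 1 b = b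
  act_act : ∀ (h g : H) (b : B) {n m : ℕ} (h1 h2 h3 : Fin n → H) (g1 g2 g3 : Fin m → H),
    IsRep3 k H h h1 h2 h3 → IsRep3 k H g g1 g2 g3 →
    act h (act g b) = ∑ i, ∑ j, σ (h1 i) (g1 j) * act (h2 i * g2 j) b * σi (h3 i) (g3 j)
  sigma_one : ∀ h : H, σ h 1 = Coalgebra.counit (R := k) h • (1 : B)
  one_sigma : ∀ h : H, σ 1 h = Coalgebra.counit (R := k) h • (1 : B)
  cocycle : ∀ (h g f : H) {n m p : ℕ} (h1 h2 : Fin n → H) (g1 g2 : Fin m → H)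
      (f1 f2 : Fin p → H),
    IsRep2 k H h h1 h2 → IsRep2 k H g g1 g2 → IsRep2 k H f f1 f2 →
    ∑ i, ∑ j, ∑ l, act (h1 i) (σ (g1 j) (f1 l)) * σ (h2 i) (g2 j * f2 l)
      = ∑ i, ∑ j, σ (h1 i) (g1 j) * σ (h2 i * g2 j) f

/-- The cocycle cross product multiplication on `P = B ⊗ H`:
`(b#h)(c#g) = b(h₍₁₎▷c)σ(h₍₂₎,g₍₁₎) # h₍₃₎g₍₂₎`, given as a bilinear map `mult`. -/
def IsCrossMul (act : H →ₗ[k] B →ₗ[k] B) (σ : H →ₗ[k] H →ₗ[k] B)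
    (mult : B ⊗[k] H →ₗ[k] B ⊗[k] H →ₗ[k] B ⊗[k] H) : Prop :=
  ∀ (b c : B) (h g : H) {n m : ℕ} (h1 h2 h3 : Fin n → H) (g1 g2 : Fin m → H),
    IsRep3 k H h h1 h2 h3 → IsRep2 k H g g1 g2 →
    mult (b ⊗ₜ[k] h) (c ⊗ₜ[k] g)
      = ∑ i, ∑ j, (b * act (h1 i) c * σ (h2 i) (g1 j)) ⊗ₜ[k] (h3 i * g2 j)

end SweedlerDefs

section HopfDefs

variable (k : Type*) [Field k]
variable (H : Type*) [Ring H] [HopfAlgebra k H]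
variable (B : Type*) [Ring B] [Algebra k B]

/-- The cocycle Hopf algebroid multiplication on `B ⊗ B ⊗ H`:
`(b⊗b'⊗h)(c⊗c'⊗g) = b(h₍₁₎▷c)σ(h₍₂₎,g₍₁₎) ⊗ c'(S(g₍₄₎)▷b')σ(S(g₍₃₎),S(h₍₄₎)) ⊗ h₍₃₎g₍₂₎`,
given as a bilinear map `mult`. -/
def IsAlgebroidMul (act : H →ₗ[k] B →ₗ[k] B) (σ : H →ₗ[k] H →ₗ[k] B)
    (mult : B ⊗[k] (B ⊗[k] H) →ₗ[k] B ⊗[k] (B ⊗[k] H) →ₗ[k] B ⊗[k] (B ⊗[k] H)) : Prop :=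
  ∀ (b b' c c' : B) (h g : H) {n m : ℕ}
    (h1 h2 h3 h4 : Fin n → H) (g1 g2 g3 g4 : Fin m → H),
    IsRep4 k H h h1 h2 h3 h4 → IsRep4 k H g g1 g2 g3 g4 →
    mult (b ⊗ₜ[k] (b' ⊗ₜ[k] h)) (c ⊗ₜ[k] (c' ⊗ₜ[k] g))
      = ∑ i, ∑ j, (b * act (h1 i) c * σ (h2 i) (g1 j)) ⊗ₜ[k]
          ((c' * act (HopfAlgebra.antipode (R := k) (g4 j)) b'
              * σ (HopfAlgebra.antipode (R := k) (g3 j))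
                  (HopfAlgebra.antipode (R := k) (h4 i))) ⊗ₜ[k] (h3 i * g2 j))

end HopfDefs

/-! ### Convolution monoids -/

section Conv
open WithConv

variable {k : Type*} [Field k]

theorem exists_fin_rep2 {V W : Type*} [AddCommGroup V] [Module k V] [AddCommGroup W] [Module k W]
    (x : V ⊗[k] W) : ∃ (n : ℕ) (v : Fin n → V) (w : Fin n → W), x = ∑ i, v i ⊗ₜ[k] w i := by
  induction x with
  | zero => exact ⟨0, Fin.elim0, Fin.elim0, by simp⟩
  | tmul v w => exact ⟨1, fun _ => v, fun _ => w, by simp⟩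
  | add x y hx hy =>
    obtain ⟨n, v, w, rfl⟩ := hx
    obtain ⟨m, v', w', rfl⟩ := hy
    exact ⟨n + m, Fin.append v v', Fin.append w w', by simp [Fin.sum_univ_add]⟩

theorem exists_fin_rep3 {V W U : Type*} [AddCommGroup V] [Module k V] [AddCommGroup W] [Module k W]
    [AddCommGroup U] [Module k U] (x : (V ⊗[k] W) ⊗[k] U) :
    ∃ (n : ℕ) (v : Fin n → V) (w : Fin n → W) (u : Fin n → U),
      x = ∑ i, (v i ⊗ₜ[k] w i) ⊗ₜ[k] u i := by
  induction x with
  | zero => exact ⟨0, Fin.elim0, Fin.elim0, Fin.elim0, by simp⟩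
  | tmul x u =>
    obtain ⟨n, v, w, rfl⟩ := exists_fin_rep2 x
    exact ⟨n, v, w, fun _ => u, by simp [TensorProduct.sum_tmul]⟩
  | add x y hx hy =>
    obtain ⟨n, v, w, u, rfl⟩ := hx
    obtain ⟨m, v', w', u', rfl⟩ := hy
    exact ⟨n + m, Fin.append v v', Fin.append w w', Fin.append u u',
      by simp [Fin.sum_univ_add]⟩

section General

variable {C D : Type*} [AddCommGroup C] [Module k C] [Coalgebra k C]
  [AddCommGroup D] [Module k D] [Coalgebra k D]
variable {A A' : Type*} [Ring A] [Algebra k A] [Ring A'] [Algebra k A']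

/-- Precomposition with a coalgebra morphism, as a morphism of convolution monoids. -/
def pb (φ : C →ₗc[k] D) : WithConv (D →ₗ[k] A) →* WithConv (C →ₗ[k] A) where
  toFun f := toConv (f.ofConv ∘ₗ φ.toLinearMap)
  map_one' := by ext c; simp
  map_mul' f g := by
    rw [LinearMap.convMul_comp_coalgHom_distrib]

@[simp] theorem pb_apply (φ : C →ₗc[k] D) (f : WithConv (D →ₗ[k] A)) (c : C) :
    pb φ f c = f (φ c) := rfl

/-- Postcomposition with an algebra morphism, as a morphism of convolution monoids. -/
def pf (ψ : A →ₐ[k] A') : WithConv (C →ₗ[k] A) →* WithConv (C →ₗ[k] A') where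
  toFun f := toConv (ψ.toLinearMap ∘ₗ f.ofConv)
  map_one' := by ext c; simp
  map_mul' f g := by
    rw [LinearMap.algHom_comp_convMul_distrib]

@[simp] theorem pf_apply (ψ : A →ₐ[k] A') (f : WithConv (C →ₗ[k] A)) (c : C) :
    pf ψ f c = ψ (f c) := rfl

variable (k C D) in
/-- The coalgebra morphism `x ⊗ y ↦ ε(y) x`. -/
def fstC : C ⊗[k] D →ₗc[k] C :=
  ((Coalgebra.TensorProduct.rid k k C : C ⊗[k] k ≃ₗc[k] C) : C ⊗[k] k →ₗc[k] C).comp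
    (Coalgebra.TensorProduct.map (CoalgHom.id k C) (counitCoalgHom k D))

@[simp] theorem fstC_tmul (x : C) (y : D) :
    fstC k C D (x ⊗ₜ[k] y) = counit (R := k) y • x := rfl

theorem conv_tmul {x : C} {y : D} {ι κ : Type*} (r : Repr k x ι) (s : Repr k y κ)
    (F G : WithConv (C ⊗[k] D →ₗ[k] A)) :
    (F * G) (x ⊗ₜ[k] y) = ∑ i ∈ r.index, ∑ j ∈ s.index,
      F (r.left i ⊗ₜ s.left j) * G (r.right i ⊗ₜ s.right j) := by
  rw [LinearMap.convMul_apply, TensorProduct.comul_tmul, ← r.eq, ← s.eq]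
  simp [TensorProduct.sum_tmul, TensorProduct.tmul_sum]
  exact Finset.sum_comm

/-- A factor depending only on the first tensor leg leaves the second leg untouched. -/
theorem conv_fst_tmul {x : C} {ι : Type*} (r : Repr k x ι) (y : D)
    (f : WithConv (C →ₗ[k] A)) (G : WithConv (C ⊗[k] D →ₗ[k] A)) :
    (pb (fstC k C D) f * G) (x ⊗ₜ[k] y) = ∑ i ∈ r.index, f (r.left i) * G (r.right i ⊗ₜ y) := by
  rw [conv_tmul r (ℛ k y)]
  refine Finset.sum_congr rfl fun i _ => ?_
  conv_rhs => rw [← sum_counit_smul (ℛ k y)]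
  simp [TensorProduct.tmul_sum, Finset.mul_sum]

end General

/-! ### Sweedler legs and measurings in convolution form -/

section Bialg

variable {H : Type*} [Ring H] [Bialgebra k H]
variable {B : Type*} [Ring B] [Algebra k B]

/-- A family realising the Sweedler legs of `h`, as a `Coalgebra.Repr`. -/
def IsRep2.repr {h : H} {n : ℕ} {h1 h2 : Fin n → H} (r : IsRep2 k H h h1 h2) :
    Repr k h (Fin n) where
  index := Finset.univ
  left := h1
  right := h2
  eq := r.symm

theorem exists_isRep2 (h : H) : ∃ (n : ℕ) (h1 h2 : Fin n → H), IsRep2 k H h h1 h2 :=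
  exists_fin_rep2 _

theorem exists_isRep3 (h : H) : ∃ (n : ℕ) (h1 h2 h3 : Fin n → H), IsRep3 k H h h1 h2 h3 :=
  exists_fin_rep3 _

theorem Δ3_apply {h : H} {ι : Type*} (r : Repr k h ι) :
    Δ3 k H h = ∑ i ∈ r.index, comul (R := k) (r.left i) ⊗ₜ[k] r.right i := by
  simp [Δ3, ← r.eq]

theorem conv_conv_tmul {h g : H} {n m : ℕ} {h1 h2 h3 : Fin n → H} {g1 g2 g3 : Fin m → H}
    (rh : IsRep3 k H h h1 h2 h3) (rg : IsRep3 k H g g1 g2 g3)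
    (F G K : WithConv (H ⊗[k] H →ₗ[k] B)) :
    (F * G * K) (h ⊗ₜ[k] g) = ∑ i, ∑ j,
      F (h1 i ⊗ₜ g1 j) * G (h2 i ⊗ₜ g2 j) * K (h3 i ⊗ₜ g3 j) := by
  let P : ((H ⊗[k] H) ⊗[k] H) ⊗[k] ((H ⊗[k] H) ⊗[k] H) →ₗ[k] B :=
    LinearMap.mul' k B ∘ₗ TensorProduct.map
      (LinearMap.mul' k B ∘ₗ TensorProduct.map F.ofConv G.ofConv ∘ₗ
        (TensorProduct.tensorTensorTensorComm k H H H H).toLinearMap) K.ofConv ∘ₗ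
      (TensorProduct.tensorTensorTensorComm k (H ⊗[k] H) H (H ⊗[k] H) H).toLinearMap
  have key : (F * G * K) (h ⊗ₜ[k] g) = P (Δ3 k H h ⊗ₜ Δ3 k H g) := by
    rw [conv_tmul (ℛ k h) (ℛ k g), Δ3_apply (ℛ k h), Δ3_apply (ℛ k g)]
    simp [P, TensorProduct.sum_tmul, TensorProduct.tmul_sum]
    rw [Finset.sum_comm]
    rfl
  rw [key, rh, rg]
  simp [P, TensorProduct.sum_tmul, TensorProduct.tmul_sum]
  exact Finset.sum_comm

/-- A factor depending only on the first two tensor legs leaves the third leg untouched. -/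
theorem conv_fst₁₂_tmul {h g : H} {ι κ : Type*} (r : Repr k h ι) (s : Repr k g κ) (f : H)
    (F : WithConv (H ⊗[k] H →ₗ[k] B)) (G : WithConv (H ⊗[k] (H ⊗[k] H) →ₗ[k] B)) :
    (pb (Coalgebra.TensorProduct.map (CoalgHom.id k H) (fstC k H H)) F * G)
        (h ⊗ₜ[k] (g ⊗ₜ[k] f)) = ∑ i ∈ r.index, ∑ j ∈ s.index,
      F (r.left i ⊗ₜ s.left j) * G (r.right i ⊗ₜ (s.right j ⊗ₜ f)) := by
  rw [conv_tmul r (s.tmul (ℛ k f))]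
  refine Finset.sum_congr rfl fun i _ => ?_
  simp only [Coalgebra.Repr.tmul, Finset.sum_product]
  refine Finset.sum_congr rfl fun j _ => ?_
  conv_rhs => rw [← sum_counit_smul (ℛ k f)]
  simp [TensorProduct.tmul_sum, Finset.mul_sum]

/-- For a measuring, `v ↦ (h ⊗ x ↦ h ▷ v(x))` is multiplicative for convolution. -/
def actC {C : Type*} [AddCommGroup C] [Module k C] [Coalgebra k C] {act : H →ₗ[k] B →ₗ[k] B}
    (hm : Measuring k H B act) : WithConv (C →ₗ[k] B) →* WithConv (H ⊗[k] C →ₗ[k] B) where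
  toFun v := toConv (TensorProduct.lift (act.compl₂ v.ofConv))
  map_one' := by
    ext h c
    simp [Algebra.algebraMap_eq_smul_one, hm.act_one, smul_smul]
  map_mul' v w := by
    refine WithConv.ofConv_injective (TensorProduct.ext' fun h c => ?_)
    obtain ⟨n, h1, h2, r⟩ := exists_isRep2 (k := k) h
    have e := conv_tmul r.repr (ℛ k c) (toConv (TensorProduct.lift (act.compl₂ v.ofConv)))
      (toConv (TensorProduct.lift (act.compl₂ w.ofConv)))
    refine Eq.trans ?_ e.symm
    change act h ((v * w) c) = _
    rw [(ℛ k c).convMul_apply, map_sum, Finset.sum_comm]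
    refine Finset.sum_congr rfl fun j _ => ?_
    exact hm.act_mul _ _ _ _ _ r

@[simp] theorem actC_tmul {C : Type*} [AddCommGroup C] [Module k C] [Coalgebra k C]
    {act : H →ₗ[k] B →ₗ[k] B} (hm : Measuring k H B act) (v : WithConv (C →ₗ[k] B)) (h : H)
    (c : C) : actC hm v (h ⊗ₜ c) = act h (v c) := rfl


variable (k) in
/-- The constant map `x ↦ ε(x) c`. -/
def constC (C : Type*) [AddCommGroup C] [Module k C] [Coalgebra k C] (c : B) :
    WithConv (C →ₗ[k] B) :=
  toConv (LinearMap.toSpanSingleton k B c ∘ₗ counit)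

theorem constC_mul_apply {C : Type*} [AddCommGroup C] [Module k C] [Coalgebra k C] (c : B)
    (v : WithConv (C →ₗ[k] B)) (x : C) : (constC k C c * v) x = c * v x := by
  rw [(ℛ k x).convMul_apply]
  conv_rhs => rw [← sum_counit_smul (ℛ k x)]
  simp [constC, Finset.mul_sum]

/-- The map `h ↦ h ▷ c`. -/
def orbC (act : H →ₗ[k] B →ₗ[k] B) (c : B) : WithConv (H →ₗ[k] B) := toConv (act.flip c)

@[simp] theorem orbC_apply (act : H →ₗ[k] B →ₗ[k] B) (c : B) (h : H) :
    orbC act c h = act h c := rfl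

theorem orbC_one {act : H →ₗ[k] B →ₗ[k] B} (hm : Measuring k H B act) :
    orbC act (1 : B) = 1 := by
  ext x
  simp [hm.act_one, Algebra.algebraMap_eq_smul_one]

/-- A bilinear map `σ`, as an element of the convolution algebra of maps `H ⊗ H → B`. -/
def bilC (σ : H →ₗ[k] H →ₗ[k] B) : WithConv (H ⊗[k] H →ₗ[k] B) := toConv (TensorProduct.lift σ)

@[simp] theorem bilC_tmul (σ : H →ₗ[k] H →ₗ[k] B) (h g : H) : bilC σ (h ⊗ₜ g) = σ h g := rfl

variable (k H B) in
/-- The embedding `B → B ⊗ H`, `b ↦ b ⊗ 1`. -/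
abbrev inB : B →ₐ[k] B ⊗[k] H := Algebra.TensorProduct.includeLeft

variable (k H B) in
/-- The map `H → B ⊗ H`, `h ↦ 1 ⊗ h`. -/
def inH : WithConv (H →ₗ[k] B ⊗[k] H) :=
  toConv (Algebra.TensorProduct.includeRight : H →ₐ[k] B ⊗[k] H).toLinearMap

@[simp] theorem inH_apply (h : H) : inH k H B h = 1 ⊗ₜ h := rfl

variable (k H) in
/-- The coalgebra morphism `h ⊗ g ⊗ f ↦ ε(f) h ⊗ g`. -/
def e12 : H ⊗[k] (H ⊗[k] H) →ₗc[k] H ⊗[k] H :=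
  Coalgebra.TensorProduct.map (CoalgHom.id k H) (fstC k H H)

variable (k H) in
/-- The coalgebra morphism `h ⊗ g ⊗ f ↦ h ⊗ gf`. -/
def m23 : H ⊗[k] (H ⊗[k] H) →ₗc[k] H ⊗[k] H :=
  Coalgebra.TensorProduct.map (CoalgHom.id k H) (Bialgebra.mulCoalgHom k H)

variable (k H) in
/-- The coalgebra morphism `h ⊗ g ⊗ f ↦ hg ⊗ f`. -/
def m12 : H ⊗[k] (H ⊗[k] H) →ₗc[k] H ⊗[k] H :=
  (Coalgebra.TensorProduct.map (Bialgebra.mulCoalgHom k H) (CoalgHom.id k H)).comp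
    ((Coalgebra.TensorProduct.assoc k k H H H).symm : _ →ₗc[k] _)

@[simp] theorem e12_tmul (h g f : H) :
    e12 k H (h ⊗ₜ (g ⊗ₜ f)) = h ⊗ₜ (counit (R := k) f • g) := rfl

@[simp] theorem m23_tmul (h g f : H) : m23 k H (h ⊗ₜ (g ⊗ₜ f)) = h ⊗ₜ (g * f) := rfl

@[simp] theorem m12_tmul (h g f : H) : m12 k H (h ⊗ₜ (g ⊗ₜ f)) = (h * g) ⊗ₜ f := rfl

theorem convExt₂ {A : Type*} [Ring A] [Algebra k A] {F G : WithConv (H ⊗[k] H →ₗ[k] A)}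
    (e : ∀ h g, F (h ⊗ₜ g) = G (h ⊗ₜ g)) : F = G :=
  WithConv.ofConv_injective (TensorProduct.ext' e)

theorem convExt₃ {A : Type*} [Ring A] [Algebra k A] {F G : WithConv (H ⊗[k] (H ⊗[k] H) →ₗ[k] A)}
    (e : ∀ h g f, F (h ⊗ₜ (g ⊗ₜ f)) = G (h ⊗ₜ (g ⊗ₜ f))) : F = G := by
  refine WithConv.ofConv_injective (TensorProduct.ext (LinearMap.ext fun h => ?_))
  exact TensorProduct.ext' fun g f => e h g f

/-- The map `h ⊗ g ↦ σ(h₍₁₎, g₍₁₎) ⊗ h₍₂₎g₍₂₎`. -/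
def sigH (σ : H →ₗ[k] H →ₗ[k] B) : WithConv (H ⊗[k] H →ₗ[k] B ⊗[k] H) :=
  pf (inB k H B) (bilC σ) * pb (Bialgebra.mulCoalgHom k H) (inH k H B)

/-! ### The two associates of the cross product -/

section Cross

variable {act : H →ₗ[k] B →ₗ[k] B} {σ : H →ₗ[k] H →ₗ[k] B}
    {mult : B ⊗[k] H →ₗ[k] B ⊗[k] H →ₗ[k] B ⊗[k] H}

/-- The cross product as a convolution product in the ordinary tensor product algebra `B ⊗ H`:
`(b ⊗ h)(c ⊗ g) = (b ⊗ 1) · (h₍₁₎ ▷ c ⊗ 1) · (σ(h₍₂₎, g₍₁₎) ⊗ h₍₃₎g₍₂₎)`. -/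
theorem IsCrossMul.tmul (hmult : IsCrossMul k H B act σ mult) (b c : B) (h g : H) :
    mult (b ⊗ₜ h) (c ⊗ₜ g) =
      (b ⊗ₜ 1) * (pf (inB k H B) (pb (fstC k H H) (orbC act c)) * sigH σ) (h ⊗ₜ[k] g) := by
  obtain ⟨n, h1, h2, h3, rh⟩ := exists_isRep3 (k := k) h
  obtain ⟨m, g1, g2, rg⟩ := exists_isRep2 (k := k) g
  rw [hmult b c h g _ _ _ _ _ rh rg, sigH, ← mul_assoc, ← map_mul,
    conv_tmul (ℛ k h) rg.repr]
  let L (y : H) : H ⊗[k] H →ₗ[k] B :=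
    LinearMap.mul' k B ∘ₗ TensorProduct.map (act.flip c) (σ.flip y)
  have hL (x y : H) : (pb (fstC k H H) (orbC act c) * bilC σ) (x ⊗ₜ[k] y) = L y (comul x) := by
    rw [conv_fst_tmul (ℛ k x)]
    simpa [L] using congrArg (L y) (ℛ k x).eq
  have key (y z : H) : ∑ i ∈ (ℛ k h).index, L y (comul ((ℛ k h).left i)) ⊗ₜ[k] ((ℛ k h).right i * z)
      = ∑ i, (act (h1 i) c * σ (h2 i) y) ⊗ₜ[k] (h3 i * z) := by
    have e := congrArg (TensorProduct.map (L y) (LinearMap.mulRight k z))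
      ((Δ3_apply (ℛ k h)).symm.trans rh)
    simpa [L] using e
  rw [Finset.sum_comm, Finset.sum_comm (s := (ℛ k h).index), Finset.mul_sum]
  refine Finset.sum_congr rfl fun j _ => ?_
  have e := key (rg.repr.left j) (rg.repr.right j)
  simp only [pf_apply, hL]
  simp only [inB, Algebra.TensorProduct.includeLeft_apply, pb_apply, Bialgebra.coe_mulCoalgHom,
    LinearMap.mul'_apply, inH_apply, Algebra.TensorProduct.tmul_mul_tmul, mul_one, one_mul]
  rw [e, Finset.mul_sum]
  simp [IsRep2.repr, mul_assoc]

/-- The cross product expanded over the legs of `h` and `g`, with the `B`-component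
`(h₍₁₎ ▷ c) σ(h₍₂₎, g₍₁₎)` kept as one convolution product. -/
theorem IsCrossMul.tmul_sum (hmult : IsCrossMul k H B act σ mult) (b c : B) (h g : H) :
    mult (b ⊗ₜ h) (c ⊗ₜ g) = ∑ i ∈ (ℛ k h).index, ∑ j ∈ (ℛ k g).index,
      (b * (pb (fstC k H H) (orbC act c) * bilC σ) ((ℛ k h).left i ⊗ₜ[k] (ℛ k g).left j)) ⊗ₜ[k]
        ((ℛ k h).right i * (ℛ k g).right j) := by
  rw [hmult.tmul, sigH, ← mul_assoc, ← map_mul, conv_tmul (ℛ k h) (ℛ k g)]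
  simp only [Finset.mul_sum, pf_apply, pb_apply, Bialgebra.coe_mulCoalgHom, LinearMap.mul'_apply,
    inH_apply, inB, Algebra.TensorProduct.includeLeft_apply,
    Algebra.TensorProduct.tmul_mul_tmul, mul_one, one_mul]

theorem IsCrossMul.assoc_left (hmult : IsCrossMul k H B act σ mult) (b c d : B) (h g f : H) :
    mult (mult (b ⊗ₜ h) (c ⊗ₜ g)) (d ⊗ₜ f) = (b ⊗ₜ 1) *
      (pb (e12 k H) (pf (inB k H B) (pb (fstC k H H) (orbC act c) * bilC σ)) *
        pb (m12 k H) (pf (inB k H B) (pb (fstC k H H) (orbC act d)) * sigH σ))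
      (h ⊗ₜ[k] (g ⊗ₜ[k] f)) := by
  rw [hmult.tmul_sum, e12, conv_fst₁₂_tmul (ℛ k h) (ℛ k g)]
  simp only [map_sum, LinearMap.sum_apply, hmult.tmul, Finset.mul_sum]
  simp only [pb_apply, pf_apply, m12_tmul, ← mul_assoc, inB,
    Algebra.TensorProduct.includeLeft_apply, Algebra.TensorProduct.tmul_mul_tmul, mul_one]

theorem IsCrossMul.assoc_right (hmult : IsCrossMul k H B act σ mult) (hm : Measuring k H B act)
    (b c d : B) (h g f : H) :
    mult (b ⊗ₜ h) (mult (c ⊗ₜ g) (d ⊗ₜ f)) = (b ⊗ₜ 1) *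
      (pf (inB k H B) (pb (fstC k H (H ⊗[k] H)) (orbC act c) *
          actC hm (pb (fstC k H H) (orbC act d) * bilC σ)) * pb (m23 k H) (sigH σ))
      (h ⊗ₜ[k] (g ⊗ₜ[k] f)) := by
  have hc : pb (fstC k H (H ⊗[k] H)) (orbC act c) = actC hm (constC k (H ⊗[k] H) c) := by
    refine convExt₃ fun x y z => ?_
    simp [constC]
  have hx (x : B) (y : H) : mult (b ⊗ₜ h) (x ⊗ₜ y) = (b ⊗ₜ 1) * ∑ i ∈ (ℛ k h).index,
      (act ((ℛ k h).left i) x ⊗ₜ[k] 1) * sigH σ ((ℛ k h).right i ⊗ₜ y) := by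
    rw [hmult.tmul]
    congr 1
    exact conv_fst_tmul (ℛ k h) y (pf (inB k H B) (orbC act x)) (sigH σ)
  rw [hc, ← map_mul, conv_tmul (ℛ k h) ((ℛ k g).tmul (ℛ k f)), hmult.tmul_sum]
  simp only [map_sum, hx, ← Finset.mul_sum]
  congr 1
  rw [← Finset.sum_product', Finset.sum_comm]
  simp only [pf_apply, actC_tmul, constC_mul_apply]
  rfl


/-- The left associate with the factors `h₍₁₎ ▷ c` and `1 ⊗ hgf` split off:
`h ⊗ g ⊗ f ↦ σ(h₍₁₎, g₍₁₎) (h₍₂₎g₍₂₎ ▷ d) σ(h₍₃₎g₍₃₎, f)`. -/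
def coreL (act : H →ₗ[k] B →ₗ[k] B) (σ : H →ₗ[k] H →ₗ[k] B) (d : B) :
    WithConv (H ⊗[k] (H ⊗[k] H) →ₗ[k] B) :=
  pb (e12 k H) (bilC σ * pb (Bialgebra.mulCoalgHom k H) (orbC act d)) * pb (m12 k H) (bilC σ)

/-- The right associate with the factors `h₍₁₎ ▷ c` and `1 ⊗ hgf` split off:
`h ⊗ g ⊗ f ↦ (h₍₁₎ ▷ (g₍₁₎ ▷ d)) (h₍₂₎ ▷ σ(g₍₂₎, f₍₁₎)) σ(h₍₃₎, g₍₃₎f₍₂₎)`. -/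
def coreR (hm : Measuring k H B act) (σ : H →ₗ[k] H →ₗ[k] B) (d : B) :
    WithConv (H ⊗[k] (H ⊗[k] H) →ₗ[k] B) :=
  pb (e12 k H) (actC hm (orbC act d)) * (actC hm (bilC σ) * pb (m23 k H) (bilC σ))

theorem left_eq_core (c d : B) :
    pb (e12 k H) (pf (inB k H B) (pb (fstC k H H) (orbC act c) * bilC σ)) *
        pb (m12 k H) (pf (inB k H B) (pb (fstC k H H) (orbC act d)) * sigH σ) =
      pf (inB k H B) (pb (fstC k H (H ⊗[k] H)) (orbC act c) * coreL act σ d) *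
        pb (m12 k H) (pb (Bialgebra.mulCoalgHom k H) (inH k H B)) := by
  have h1 : pb (e12 k H) (pf (inB k H B) (pb (fstC k H H) (orbC act c))) =
      pf (inB k H B) (pb (fstC k H (H ⊗[k] H)) (orbC act c)) :=
    convExt₃ fun x y z => by simp [smul_smul, mul_comm]
  have h2 : pb (m12 k H) (pf (inB k H B) (pb (fstC k H H) (orbC act d))) =
      pf (inB k H B) (pb (e12 k H) (pb (Bialgebra.mulCoalgHom k H) (orbC act d))) :=
    convExt₃ fun x y z => by simp
  have h3 (v) : pb (e12 k H) (pf (inB k H B) v) = pf (inB k H B) (pb (e12 k H) v) := rfl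
  have h4 (v) : pb (m12 k H) (pf (inB k H B) v) = pf (inB k H B) (pb (m12 k H) v) := rfl
  simp only [coreL, sigH, map_mul, h1, h2, mul_assoc]
  simp only [h3, h4]

theorem right_eq_core (hm : Measuring k H B act) (c d : B) :
    pf (inB k H B) (pb (fstC k H (H ⊗[k] H)) (orbC act c) *
          actC hm (pb (fstC k H H) (orbC act d) * bilC σ)) * pb (m23 k H) (sigH σ) =
      pf (inB k H B) (pb (fstC k H (H ⊗[k] H)) (orbC act c) * coreR hm σ d) *
        pb (m12 k H) (pb (Bialgebra.mulCoalgHom k H) (inH k H B)) := by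
  have h1 : actC hm (pb (fstC k H H) (orbC act d)) = pb (e12 k H) (actC hm (orbC act d)) :=
    convExt₃ fun x y z => by simp
  have h2 : pb (m23 k H) (pb (Bialgebra.mulCoalgHom k H) (inH k H B)) =
      pb (m12 k H) (pb (Bialgebra.mulCoalgHom k H) (inH k H B)) :=
    convExt₃ fun x y z => by simp [mul_assoc]
  have h3 (v) : pb (m23 k H) (pf (inB k H B) v) = pf (inB k H B) (pb (m23 k H) v) := rfl
  simp only [coreR, sigH, map_mul, h1, h2, mul_assoc]
  simp only [h3]

/-- Associativity of the cross product is the equality of the two core maps. The factor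
`h₍₁₎ ▷ c` becomes the unit at `c = 1`, and `1 ⊗ hgf` is sent to the unit by the algebra
morphism `id ⊗ ε : B ⊗ H → B`. -/
theorem assoc_iff_core (hmult : IsCrossMul k H B act σ mult) (hm : Measuring k H B act) :
    (∀ x y z, mult (mult x y) z = mult x (mult y z)) ↔ ∀ d, coreL act σ d = coreR hm σ d := by
  constructor
  · intro ha d
    have e : pf (inB k H B) (coreL act σ d) *
          pb (m12 k H) (pb (Bialgebra.mulCoalgHom k H) (inH k H B)) =
        pf (inB k H B) (coreR hm σ d) *
          pb (m12 k H) (pb (Bialgebra.mulCoalgHom k H) (inH k H B)) := by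
      have h1 := orbC_one hm
      have hl := left_eq_core (act := act) (σ := σ) 1 d
      have hr := right_eq_core (σ := σ) hm 1 d
      simp only [h1, map_one, one_mul] at hl hr
      rw [← hl, ← hr]
      refine convExt₃ fun h g f => ?_
      have := ha (1 ⊗ₜ h) (1 ⊗ₜ g) (d ⊗ₜ f)
      rw [hmult.assoc_left, hmult.assoc_right hm, ← Algebra.TensorProduct.one_def, one_mul,
        one_mul] at this
      simpa only [h1, map_one, one_mul] using this
    -- `ρ = id ⊗ ε`
    let ρ : B ⊗[k] H →ₐ[k] B := (Algebra.TensorProduct.rid k k B).toAlgHom.comp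
      (Algebra.TensorProduct.map (AlgHom.id k B) (Bialgebra.counitAlgHom k H))
    have hρ (v : WithConv (H ⊗[k] (H ⊗[k] H) →ₗ[k] B)) : pf ρ (pf (inB k H B) v) = v :=
      convExt₃ fun x y z => by simp [ρ]
    have hρ1 : pf ρ (pb (m12 k H) (pb (Bialgebra.mulCoalgHom k H) (inH k H B))) = 1 :=
      convExt₃ fun x y z => by
        simp [ρ, Algebra.algebraMap_eq_smul_one, mul_comm, mul_left_comm]
    simpa only [map_mul, hρ, hρ1, mul_one] using congrArg (pf ρ) e
  · intro hc x y z
    induction x with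
    | zero => simp
    | add x x' hx hx' => simp [hx, hx']
    | tmul b h =>
      induction y with
      | zero => simp
      | add y y' hy hy' => simp [hy, hy']
      | tmul c g =>
        induction z with
        | zero => simp
        | add z z' hz hz' => simp [hz, hz']
        | tmul d f =>
          rw [hmult.assoc_left, hmult.assoc_right hm, left_eq_core, right_eq_core, hc]

/-- The core maps agree for all `d` iff the twisted action law and the cocycle law hold:
`d = 1` gives the cocycle law, after which the common factor `σ(hg, f)` is cancelled using the
convolution inverse of `σ`. -/
theorem core_iff {σi : H →ₗ[k] H →ₗ[k] B} (hm : Measuring k H B act)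
    (hl : bilC σ * bilC σi = 1) (hr : bilC σi * bilC σ = 1) :
    (∀ d, coreL act σ d = coreR hm σ d) ↔
      (∀ d, actC hm (orbC act d) =
        bilC σ * pb (Bialgebra.mulCoalgHom k H) (orbC act d) * bilC σi) ∧
      actC hm (bilC σ) * pb (m23 k H) (bilC σ) = pb (e12 k H) (bilC σ) * pb (m12 k H) (bilC σ) := by
  have h1 := orbC_one hm
  constructor
  · intro hc
    have hb : actC hm (bilC σ) * pb (m23 k H) (bilC σ) =
        pb (e12 k H) (bilC σ) * pb (m12 k H) (bilC σ) := by
      have := hc 1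
      simp only [coreL, coreR, h1, map_one, mul_one, one_mul] at this
      exact this.symm
    refine ⟨fun d => ?_, hb⟩
    have e := congrArg (· * pb (m12 k H) (bilC σi)) (hc d)
    simp only [coreL, coreR, hb] at e
    simp only [mul_assoc, ← map_mul, hl, map_one, mul_one] at e
    -- the third leg is removed by evaluating at `f = 1`
    have e' : bilC σ * pb (Bialgebra.mulCoalgHom k H) (orbC act d) =
        actC hm (orbC act d) * bilC σ := by
      refine convExt₂ fun h g => ?_
      have := congrArg (fun F => F.ofConv (h ⊗ₜ (g ⊗ₜ (1 : H)))) e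
      simpa only [pb_apply, e12_tmul, Bialgebra.counit_one, one_smul] using this
    rw [e', mul_assoc, hl, mul_one]
  · rintro ⟨ha, hb⟩ d
    rw [coreL, coreR, hb, ha, ← mul_assoc, ← map_mul, mul_assoc _ (bilC σi), hr, mul_one]

end Cross

/-! ### Translation of the axioms stated with Sweedler legs -/

theorem bilC_mul_eq_one_of {σ σi : H →ₗ[k] H →ₗ[k] B}
    (hc : ∀ (h g : H) {n m : ℕ} (h1 h2 : Fin n → H) (g1 g2 : Fin m → H),
      IsRep2 k H h h1 h2 → IsRep2 k H g g1 g2 →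
      ∑ i, ∑ j, σ (h1 i) (g1 j) * σi (h2 i) (g2 j)
        = (Coalgebra.counit (R := k) h * Coalgebra.counit (R := k) g) • (1 : B)) :
    bilC σ * bilC σi = 1 := by
  refine convExt₂ fun h g => ?_
  obtain ⟨n, h1, h2, rh⟩ := exists_isRep2 (k := k) h
  obtain ⟨m, g1, g2, rg⟩ := exists_isRep2 (k := k) g
  rw [conv_tmul rh.repr rg.repr]
  refine (hc h g h1 h2 g1 g2 rh rg).trans ?_
  simp [Algebra.algebraMap_eq_smul_one, mul_comm]

theorem act_act_iff {act : H →ₗ[k] B →ₗ[k] B} {σ σi : H →ₗ[k] H →ₗ[k] B}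
    (hm : Measuring k H B act) :
    (∀ (h g : H) (b : B) {n m : ℕ} (h1 h2 h3 : Fin n → H) (g1 g2 g3 : Fin m → H),
        IsRep3 k H h h1 h2 h3 → IsRep3 k H g g1 g2 g3 →
        act h (act g b)
          = ∑ i, ∑ j, σ (h1 i) (g1 j) * act (h2 i * g2 j) b * σi (h3 i) (g3 j)) ↔
      ∀ d, actC hm (orbC act d) =
        bilC σ * pb (Bialgebra.mulCoalgHom k H) (orbC act d) * bilC σi := by
  constructor
  · intro ha d
    refine convExt₂ fun h g => ?_
    obtain ⟨n, h1, h2, h3, rh⟩ := exists_isRep3 (k := k) h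
    obtain ⟨m, g1, g2, g3, rg⟩ := exists_isRep3 (k := k) g
    rw [conv_conv_tmul rh rg]
    exact ha h g d _ _ _ _ _ _ rh rg
  · intro ha h g b n m h1 h2 h3 g1 g2 g3 rh rg
    have := congrArg (fun F => F.ofConv (h ⊗ₜ g)) (ha b)
    rw [conv_conv_tmul rh rg] at this
    exact this

theorem cocycle_iff {act : H →ₗ[k] B →ₗ[k] B} {σ : H →ₗ[k] H →ₗ[k] B}
    (hm : Measuring k H B act) :
    (∀ (h g f : H) {n m p : ℕ} (h1 h2 : Fin n → H) (g1 g2 : Fin m → H)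
            (f1 f2 : Fin p → H),
          IsRep2 k H h h1 h2 → IsRep2 k H g g1 g2 → IsRep2 k H f f1 f2 →
          ∑ i, ∑ j, ∑ l, act (h1 i) (σ (g1 j) (f1 l)) * σ (h2 i) (g2 j * f2 l)
            = ∑ i, ∑ j, σ (h1 i) (g1 j) * σ (h2 i * g2 j) f) ↔
      actC hm (bilC σ) * pb (m23 k H) (bilC σ) =
        pb (e12 k H) (bilC σ) * pb (m12 k H) (bilC σ) := by
  have hL (h g f : H) {n m p : ℕ} (h1 h2 : Fin n → H) (g1 g2 : Fin m → H)
      (f1 f2 : Fin p → H) (rh : IsRep2 k H h h1 h2) (rg : IsRep2 k H g g1 g2)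
      (rf : IsRep2 k H f f1 f2) :
      (actC hm (bilC σ) * pb (m23 k H) (bilC σ)) (h ⊗ₜ (g ⊗ₜ f)) =
        ∑ i, ∑ j, ∑ l, act (h1 i) (σ (g1 j) (f1 l)) * σ (h2 i) (g2 j * f2 l) := by
    rw [conv_tmul rh.repr (rg.repr.tmul rf.repr)]
    simp only [Coalgebra.Repr.tmul, Finset.sum_product]
    rfl
  have hR (h g f : H) {n m : ℕ} (h1 h2 : Fin n → H) (g1 g2 : Fin m → H)
      (rh : IsRep2 k H h h1 h2) (rg : IsRep2 k H g g1 g2) :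
      (pb (e12 k H) (bilC σ) * pb (m12 k H) (bilC σ)) (h ⊗ₜ (g ⊗ₜ f)) =
        ∑ i, ∑ j, σ (h1 i) (g1 j) * σ (h2 i * g2 j) f := by
    rw [e12, conv_fst₁₂_tmul rh.repr rg.repr]
    rfl
  constructor
  · intro hb
    refine convExt₃ fun h g f => ?_
    obtain ⟨n, h1, h2, rh⟩ := exists_isRep2 (k := k) h
    obtain ⟨m, g1, g2, rg⟩ := exists_isRep2 (k := k) g
    obtain ⟨p, f1, f2, rf⟩ := exists_isRep2 (k := k) f
    rw [hL h g f _ _ _ _ _ _ rh rg rf, hR h g f _ _ _ _ rh rg]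
    exact hb h g f _ _ _ _ _ _ rh rg rf
  · intro hb h g f n m p h1 h2 g1 g2 f1 f2 rh rg rf
    rw [← hL h g f _ _ _ _ _ _ rh rg rf, hb, hR h g f _ _ _ _ rh rg]

theorem IsCrossMul.unit {act : H →ₗ[k] B →ₗ[k] B} {σ : H →ₗ[k] H →ₗ[k] B}
    {mult : B ⊗[k] H →ₗ[k] B ⊗[k] H →ₗ[k] B ⊗[k] H} (hmult : IsCrossMul k H B act σ mult)
    (hm : Measuring k H B act)
    (hσ1 : ∀ h : H, σ h 1 = Coalgebra.counit (R := k) h • (1 : B))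
    (h1σ : ∀ h : H, σ 1 h = Coalgebra.counit (R := k) h • (1 : B))
    (h1act : ∀ b : B, act 1 b = b) (x : B ⊗[k] H) :
    mult ((1 : B) ⊗ₜ[k] (1 : H)) x = x ∧ mult x ((1 : B) ⊗ₜ[k] (1 : H)) = x := by
  induction x with
  | zero => simp
  | add x y hx hy => simp [hx.1, hx.2, hy.1, hy.2]
  | tmul b h =>
    have r1 : IsRep2 k H (1 : H) (fun _ : Fin 1 => (1 : H)) (fun _ => (1 : H)) := by
      simp [IsRep2, Algebra.TensorProduct.one_def]
    have r1' : IsRep3 k H (1 : H) (fun _ : Fin 1 => (1 : H)) (fun _ => (1 : H))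
        (fun _ => (1 : H)) := by
      simp [IsRep3, Δ3, Algebra.TensorProduct.one_def]
    constructor
    · obtain ⟨n, h1, h2, rh⟩ := exists_isRep2 (k := k) h
      rw [hmult _ _ _ _ _ _ _ _ _ r1' rh]
      conv_rhs => rw [← sum_counit_smul rh.repr]
      simp [h1act, h1σ, IsRep2.repr, TensorProduct.tmul_sum, TensorProduct.smul_tmul]
    · rw [hmult.tmul, orbC_one hm, map_one, map_one, one_mul, sigH, conv_tmul (ℛ k h) r1.repr]
      conv_rhs => rw [← sum_counit_smul (ℛ k h)]
      simp [hσ1, IsRep2.repr, TensorProduct.tmul_sum, Finset.mul_sum]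

end Bialg
end Conv

section Statements

variable {k : Type*} [Field k]
variable {H : Type*} [Ring H] [HopfAlgebra k H]
variable {B : Type*} [Ring B] [Algebra k B]

/-- The cocycle cross product `B #_σ H` is an associative unital algebra iff the two
remaining cocycle-datum axioms hold. -/
theorem statement2 (act : H →ₗ[k] B →ₗ[k] B) (σ σi : H →ₗ[k] H →ₗ[k] B)
    (hmeas : Measuring k H B act)
    (hconv_left : ∀ (h g : H) {n m : ℕ} (h1 h2 : Fin n → H) (g1 g2 : Fin m → H),
      IsRep2 k H h h1 h2 → IsRep2 k H g g1 g2 →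
      ∑ i, ∑ j, σ (h1 i) (g1 j) * σi (h2 i) (g2 j)
        = (Coalgebra.counit (R := k) h * Coalgebra.counit (R := k) g) • (1 : B))
    (hconv_right : ∀ (h g : H) {n m : ℕ} (h1 h2 : Fin n → H) (g1 g2 : Fin m → H),
      IsRep2 k H h h1 h2 → IsRep2 k H g g1 g2 →
      ∑ i, ∑ j, σi (h1 i) (g1 j) * σ (h2 i) (g2 j)
        = (Coalgebra.counit (R := k) h * Coalgebra.counit (R := k) g) • (1 : B))
    (hσ1 : ∀ h : H, σ h 1 = Coalgebra.counit (R := k) h • (1 : B))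
    (h1σ : ∀ h : H, σ 1 h = Coalgebra.counit (R := k) h • (1 : B))
    (h1act : ∀ b : B, act 1 b = b)
    (mult : B ⊗[k] H →ₗ[k] B ⊗[k] H →ₗ[k] B ⊗[k] H)
    (hmult : IsCrossMul k H B act σ mult) :
    ((∀ x y z : B ⊗[k] H, mult (mult x y) z = mult x (mult y z))
      ∧ (∀ x : B ⊗[k] H,
          mult ((1 : B) ⊗ₜ[k] (1 : H)) x = x ∧ mult x ((1 : B) ⊗ₜ[k] (1 : H)) = x))
    ↔
    ((∀ (h g : H) (b : B) {n m : ℕ} (h1 h2 h3 : Fin n → H) (g1 g2 g3 : Fin m → H),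
        IsRep3 k H h h1 h2 h3 → IsRep3 k H g g1 g2 g3 →
        act h (act g b)
          = ∑ i, ∑ j, σ (h1 i) (g1 j) * act (h2 i * g2 j) b * σi (h3 i) (g3 j))
      ∧ (∀ (h g f : H) {n m p : ℕ} (h1 h2 : Fin n → H) (g1 g2 : Fin m → H)
            (f1 f2 : Fin p → H),
          IsRep2 k H h h1 h2 → IsRep2 k H g g1 g2 → IsRep2 k H f f1 f2 →
          ∑ i, ∑ j, ∑ l, act (h1 i) (σ (g1 j) (f1 l)) * σ (h2 i) (g2 j * f2 l)
            = ∑ i, ∑ j, σ (h1 i) (g1 j) * σ (h2 i * g2 j) f)) := by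
  have hl := bilC_mul_eq_one_of hconv_left
  have hr := bilC_mul_eq_one_of hconv_right
  rw [assoc_iff_core hmult hmeas, core_iff hmeas hl hr, act_act_iff hmeas, cocycle_iff hmeas]
  exact and_iff_left (hmult.unit hmeas hσ1 h1σ h1act)

end Statements
end
end

section
/- Let (▷,σ) be a cocycle datum of associative type for a Hopf algebra H on an algebra B. Then for all h ∈ H and b ∈ B: (S(h_{(3)})▷b)·σ⁻¹(S(h_{(1)}), h_{(2)}) = σ⁻¹(S(h_{(2)}), h_{(3)})·(S(h_{(1)})▷b). -/
/-!
Write `α_b(x ⊗ y) = (xy) ▷ b`. When `▷` is an action, the twisted module condition says that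
`σ * α_b * σ⁻¹ = α_b` in the convolution algebra of linear maps `H ⊗ H → B`, so
`σ⁻¹ * α_b = α_b * σ⁻¹` (`conv_comm`). Evaluating this at `S(h₍₁₎) ⊗ h₍₂₎`, and using that the
antipode reverses the coproduct (`comul_antipode`), gives (`sandwichAct_Δ4`)

  `σ⁻¹(S(h₍₂₎), h₍₃₎) ((S(h₍₁₎) h₍₄₎) ▷ b) = (S(h₍₂₎) h₍₃₎ ▷ b) σ⁻¹(S(h₍₁₎), h₍₄₎)`
  `  = b σ⁻¹(S(h₍₁₎), h₍₂₎)`.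

Splitting off one further leg `c` of `h` and replacing `b` by `S(c) ▷ b`, the right-hand side
becomes `(S(h₍₃₎) ▷ b) σ⁻¹(S(h₍₁₎), h₍₂₎)`, while on the left `h₍₄₎ S(h₍₅₎)` collapses to the counit
and leaves `σ⁻¹(S(h₍₂₎), h₍₃₎) (S(h₍₁₎) ▷ b)`.

Sweedler identities are expressed as equalities between linear maps applied to the tensors
`Δ3 k H h` and `Δ4 k H h`.
-/

open scoped TensorProduct
open Coalgebra

noncomputable section

section Aux

open TensorProduct WithConv

variable (k : Type*) [Field k]
variable (H : Type*) [Ring H] [HopfAlgebra k H]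

/-- The permutation of legs `x ⊗ y ⊗ z ⊗ w ↦ (y ⊗ z) ⊗ (x ⊗ w)`. -/
def sandwich : ((H ⊗[k] H) ⊗[k] H) ⊗[k] H →ₗ[k] (H ⊗[k] H) ⊗[k] (H ⊗[k] H) :=
  (TensorProduct.tensorTensorTensorComm k H H H H).toLinearMap ∘ₗ
    (TensorProduct.comm k H H).toLinearMap.rTensor (H ⊗[k] H) ∘ₗ
    (TensorProduct.assoc k (H ⊗[k] H) H H).toLinearMap

@[simp]
lemma sandwich_tmul (x y z w : H) :
    sandwich k H (((x ⊗ₜ[k] y) ⊗ₜ[k] z) ⊗ₜ[k] w) = (y ⊗ₜ[k] z) ⊗ₜ[k] (x ⊗ₜ[k] w) := by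
  simp [sandwich]

/-- The linear map `x ⊗ y ↦ S(x) y`. -/
def antipodeMul : H ⊗[k] H →ₗ[k] H :=
  LinearMap.mul' k H ∘ₗ (HopfAlgebra.antipode k).rTensor H

@[simp]
lemma antipodeMul_tmul (x y : H) :
    antipodeMul k H (x ⊗ₜ[k] y) = HopfAlgebra.antipode k x * y := by
  simp [antipodeMul]

/-- The linear map `x ⊗ y ↦ x S(y)`. -/
def mulAntipode : H ⊗[k] H →ₗ[k] H :=
  LinearMap.mul' k H ∘ₗ (HopfAlgebra.antipode k).lTensor H

@[simp]
lemma mulAntipode_tmul (x y : H) :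
    mulAntipode k H (x ⊗ₜ[k] y) = x * HopfAlgebra.antipode k y := by
  simp [mulAntipode]

variable {H}

lemma Δ3_apply_s6 (h : H) : Δ3 k H h = (comul (R := k) (A := H)).rTensor H (comul h) := rfl

lemma Δ4_apply (h : H) : Δ4 k H h = (Δ3 k H).rTensor H (comul h) := rfl

lemma antipodeMul_comul (h : H) :
    antipodeMul k H (comul h) = algebraMap k H (counit h) := by
  simp [antipodeMul]

lemma mulAntipode_comul (h : H) :
    mulAntipode k H (comul h) = algebraMap k H (counit h) := by
  simp [mulAntipode]

/-- `h₍₁₎ ⊗ φ(h₍₂₎ ⊗ h₍₃₎) = h ⊗ 1` whenever `φ(h₍₁₎ ⊗ h₍₂₎) = ε(h)1`. -/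
lemma collapse (φ : H ⊗[k] H →ₗ[k] H)
    (hφ : ∀ h, φ (comul h) = algebraMap k H (counit h)) (h : H) :
    φ.lTensor H (TensorProduct.assoc k H H H (Δ3 k H h)) = h ⊗ₜ[k] 1 := by
  have e : φ ∘ₗ comul = Algebra.linearMap k H ∘ₗ counit := by
    ext x; simp [hφ]
  rw [Δ3_apply_s6, coassoc_apply, ← LinearMap.comp_apply, ← LinearMap.lTensor_comp,
    e, LinearMap.lTensor_comp, LinearMap.comp_apply, lTensor_counit_comul]
  simp

/-- The two bracketings of `h₍₁₎ ⊗ h₍₂₎ ⊗ h₍₃₎ ⊗ h₍₄₎` agree. -/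
lemma map_comul_comul_comul (h : H) :
    TensorProduct.map comul comul (comul (R := k) h)
      = TensorProduct.assoc k (H ⊗[k] H) H H (Δ4 k H h) := by
  have e : ∀ x : (H ⊗[k] H) ⊗[k] H,
      (comul (R := k) (A := H)).rTensor (H ⊗[k] H) (TensorProduct.assoc k H H H x)
        = TensorProduct.assoc k (H ⊗[k] H) H H
          (((comul (R := k) (A := H)).rTensor H).rTensor H x) := by
    intro x
    refine LinearMap.congr_fun (f := (comul (R := k) (A := H)).rTensor (H ⊗[k] H) ∘ₗ
      (TensorProduct.assoc k H H H).toLinearMap) (g :=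
      (TensorProduct.assoc k (H ⊗[k] H) H H).toLinearMap ∘ₗ
          (((comul (R := k) (A := H)).rTensor H).rTensor H)) ?_ x
    ext a b c
    simp
  rw [← LinearMap.rTensor_comp_lTensor, LinearMap.comp_apply, ← coassoc_apply, e, Δ4, Δ3,
    LinearMap.rTensor_comp]
  rfl

/-- `S(h₍₂₎) h₍₃₎ ⊗ (h₍₁₎ ⊗ h₍₄₎) = 1 ⊗ Δh`. -/
lemma sandwich_collapse (h : H) :
    (antipodeMul k H).rTensor (H ⊗[k] H) (sandwich k H (Δ4 k H h)) = 1 ⊗ₜ[k] comul h := by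
  have e : ∀ (x : (H ⊗[k] H) ⊗[k] H) (w : H),
      (antipodeMul k H).rTensor (H ⊗[k] H) (sandwich k H (x ⊗ₜ[k] w))
        = (TensorProduct.leftComm k H H H) (TensorProduct.assoc k H H H
          ((antipodeMul k H).lTensor H (TensorProduct.assoc k H H H x) ⊗ₜ[k] w)) := by
    intro x w
    induction x with
    | zero => simp
    | add x y hx hy => simp only [TensorProduct.add_tmul, map_add, hx, hy]
    | tmul x z =>
      induction x with
      | zero => simp
      | add x y hx hy => simp only [TensorProduct.add_tmul, map_add, hx, hy]
      | tmul x y => simp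
  rw [Δ4_apply]
  induction comul (R := k) h with
  | zero => simp
  | add x y hx hy => simp only [TensorProduct.tmul_add, map_add, hx, hy]
  | tmul x y => rw [LinearMap.rTensor_tmul, e, collapse k _ (antipodeMul_comul k)]; simp

/-- The antipode reverses the coproduct: `Δ(S h) = S(h₍₂₎) ⊗ S(h₍₁₎)`. Both sides are
convolution inverse to `Δ : H → H ⊗ H`. -/
lemma comul_antipode (h : H) :
    comul (R := k) (HopfAlgebra.antipode k h)
      = TensorProduct.map (HopfAlgebra.antipode k) (HopfAlgebra.antipode k)
        (TensorProduct.comm k H H (comul h)) := by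
  have key : toConv (TensorProduct.map (HopfAlgebra.antipode k) (HopfAlgebra.antipode k) ∘ₗ
      (TensorProduct.comm k H H).toLinearMap ∘ₗ comul) * toConv (comul (R := k) (A := H)) = 1 := by
    ext h
    have e : ∀ x : ((H ⊗[k] H) ⊗[k] H) ⊗[k] H,
        LinearMap.mul' k (H ⊗[k] H) (TensorProduct.map
          (TensorProduct.map (HopfAlgebra.antipode k) (HopfAlgebra.antipode k) ∘ₗ
            (TensorProduct.comm k H H).toLinearMap) LinearMap.id
            (TensorProduct.assoc k (H ⊗[k] H) H H x))
          = (antipodeMul k H).lTensor H ((antipodeMul k H).rTensor (H ⊗[k] H)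
              (sandwich k H x)) := by
      intro x
      refine LinearMap.congr_fun (f := LinearMap.mul' k (H ⊗[k] H) ∘ₗ (TensorProduct.map
          (TensorProduct.map (HopfAlgebra.antipode k) (HopfAlgebra.antipode k) ∘ₗ
            (TensorProduct.comm k H H).toLinearMap) LinearMap.id) ∘ₗ
            (TensorProduct.assoc k (H ⊗[k] H) H H).toLinearMap) (g :=
          (antipodeMul k H).lTensor H ∘ₗ (antipodeMul k H).rTensor (H ⊗[k] H) ∘ₗ
              (sandwich k H)) ?_ x
      ext a b c d
      simp
    rw [LinearMap.convMul_apply, LinearMap.convOne_apply, ofConv_toConv, ofConv_toConv,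
      ← LinearMap.comp_assoc, ← LinearMap.id_comp (comul (R := k) (A := H)),
      ← LinearMap.comp_assoc, TensorProduct.map_comp, LinearMap.comp_apply, LinearMap.comp_id,
      LinearMap.id_comp,
      map_comul_comul_comul, e, sandwich_collapse, LinearMap.lTensor_tmul, antipodeMul_comul]
    simp [Algebra.algebraMap_eq_smul_one, Algebra.TensorProduct.one_def]
  have := left_inv_eq_right_inv key LinearMap.comul_right_inv
  exact (LinearMap.congr_fun (toConv_injective this) h).symm

/-- The coproduct of `H ⊗ H` at `S(h₍₁₎) ⊗ h₍₂₎`. -/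
lemma comul_antipode_tmul (h : H) :
    comul (R := k) ((HopfAlgebra.antipode k).rTensor H (comul h))
      = TensorProduct.map ((HopfAlgebra.antipode k).rTensor H)
          ((HopfAlgebra.antipode k).rTensor H) (sandwich k H (Δ4 k H h)) := by
  have e : ∀ x : H ⊗[k] H, comul (R := k) ((HopfAlgebra.antipode k).rTensor H x)
      = TensorProduct.map ((HopfAlgebra.antipode k).rTensor H)
          ((HopfAlgebra.antipode k).rTensor H)
          (TensorProduct.tensorTensorTensorComm k H H H H
            ((TensorProduct.comm k H H).toLinearMap.rTensor (H ⊗[k] H)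
              (TensorProduct.map comul comul x))) := by
    intro x
    induction x with
    | zero => simp
    | add x y hx hy => simp only [map_add, hx, hy]
    | tmul x y =>
      simp only [LinearMap.rTensor_tmul, TensorProduct.comul_tmul, comul_antipode,
        TensorProduct.map_tmul, LinearEquiv.coe_coe]
      induction comul (R := k) x with
      | zero => simp
      | add x y hx hy => simp only [TensorProduct.add_tmul, map_add, hx, hy]
      | tmul a b =>
        induction comul (R := k) y with
        | zero => simp
        | add x y hx hy => simp only [TensorProduct.tmul_add, map_add, hx, hy]
        | tmul c d => simp
  rw [e, map_comul_comul_comul]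
  rfl

/-- Every element of `H ⊗ H` is a finite sum of pure tensors. -/
lemma exists_fin2 (x : H ⊗[k] H) :
    ∃ (n : ℕ) (a b : Fin n → H), x = ∑ i, a i ⊗ₜ[k] b i := by
  induction x with
  | zero => exact ⟨0, 0, 0, by simp⟩
  | tmul a b => exact ⟨1, fun _ => a, fun _ => b, by simp⟩
  | add x y hx hy =>
    obtain ⟨n, a, b, rfl⟩ := hx
    obtain ⟨m, a', b', rfl⟩ := hy
    exact ⟨n + m, Fin.append a a', Fin.append b b', by simp [Fin.sum_univ_add]⟩

/-- Every element of `(H ⊗ H) ⊗ H` is a finite sum of pure tensors. -/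
lemma exists_fin3 (x : (H ⊗[k] H) ⊗[k] H) :
    ∃ (n : ℕ) (a b c : Fin n → H), x = ∑ i, (a i ⊗ₜ[k] b i) ⊗ₜ[k] c i := by
  induction x with
  | zero => exact ⟨0, 0, 0, 0, by simp⟩
  | tmul x c =>
    obtain ⟨n, a, b, rfl⟩ := exists_fin2 k x
    exact ⟨n, a, b, fun _ => c, by simp [TensorProduct.sum_tmul]⟩
  | add x y hx hy =>
    obtain ⟨n, a, b, c, rfl⟩ := hx
    obtain ⟨m, a', b', c', rfl⟩ := hy
    exact ⟨n + m, Fin.append a a', Fin.append b b', Fin.append c c',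
      by simp [Fin.sum_univ_add]⟩

variable {k}
variable {B : Type*} [Ring B] [Algebra k B]
  {act : H →ₗ[k] B →ₗ[k] B} {σ σi : H →ₗ[k] H →ₗ[k] B}

lemma lift_conv_apply (f g : H →ₗ[k] H →ₗ[k] B) (x y : H) {n m : ℕ}
    {x1 x2 : Fin n → H} {y1 y2 : Fin m → H} (hx : IsRep2 k H x x1 x2) (hy : IsRep2 k H y y1 y2) :
    (toConv (TensorProduct.lift f) * toConv (TensorProduct.lift g)) (x ⊗ₜ[k] y)
      = ∑ i, ∑ j, f (x1 i) (y1 j) * g (x2 i) (y2 j) := by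
  unfold IsRep2 at hx hy
  rw [LinearMap.convMul_apply, TensorProduct.comul_tmul, hx, hy]
  rw [Finset.sum_comm]
  simp [TensorProduct.sum_tmul, TensorProduct.tmul_sum]

lemma conv_eq_one {f g : H →ₗ[k] H →ₗ[k] B}
    (hfg : ∀ (h g' : H) {n m : ℕ} (h1 h2 : Fin n → H) (g1 g2 : Fin m → H),
      IsRep2 k H h h1 h2 → IsRep2 k H g' g1 g2 →
      ∑ i, ∑ j, f (h1 i) (g1 j) * g (h2 i) (g2 j)
        = (Coalgebra.counit (R := k) h * Coalgebra.counit (R := k) g') • (1 : B)) :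
    toConv (TensorProduct.lift f) * toConv (TensorProduct.lift g) = 1 := by
  apply WithConv.ext
  ext x y
  obtain ⟨n, x1, x2, hx⟩ := exists_fin2 k (comul (R := k) x)
  obtain ⟨m, y1, y2, hy⟩ := exists_fin2 k (comul (R := k) y)
  refine (lift_conv_apply f g x y hx hy).trans ((hfg x y x1 x2 y1 y2 hx hy).trans ?_)
  change _ = (1 : WithConv (H ⊗[k] H →ₗ[k] B)) (x ⊗ₜ[k] y)
  rw [LinearMap.convOne_apply, TensorProduct.counit_tmul, Algebra.algebraMap_eq_smul_one]
  simp [mul_comm]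

/-- The linear map `x ⊗ y ↦ (xy) ▷ b`. -/
def mulAct (act : H →ₗ[k] B →ₗ[k] B) (b : B) : H ⊗[k] H →ₗ[k] B :=
  act.flip b ∘ₗ LinearMap.mul' k H

@[simp]
lemma mulAct_tmul (b : B) (x y : H) : mulAct act b (x ⊗ₜ[k] y) = act (x * y) b := rfl

/-- For a datum of associative type, `σ * α * σ⁻¹ = α` for `α(x ⊗ y) = (xy) ▷ b`. -/
lemma conv_conj (hcd : CocycleDatum k H B act σ σi)
    (hassoc : ∀ (h g : H) (b : B), act h (act g b) = act (h * g) b) (b : B) :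
    toConv (TensorProduct.lift σ) * toConv (mulAct act b) * toConv (TensorProduct.lift σi)
      = toConv (mulAct act b) := by
  apply WithConv.ext
  ext x y
  obtain ⟨n, x1, x2, x3, hx⟩ := exists_fin3 k (Δ3 k H x)
  obtain ⟨m, y1, y2, y3, hy⟩ := exists_fin3 k (Δ3 k H y)
  change (toConv (TensorProduct.lift σ) * toConv (mulAct act b) *
    toConv (TensorProduct.lift σi)) (x ⊗ₜ[k] y) = act (x * y) b
  rw [← hassoc, hcd.act_act x y b x1 x2 x3 y1 y2 y3 hx hy]
  -- `L` sends `(a ⊗ b ⊗ c) ⊗ (a' ⊗ b' ⊗ c')` to `σ(a,a') α(b ⊗ b') σ⁻¹(c,c')`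
  let L : ((H ⊗[k] H) ⊗[k] H) ⊗[k] ((H ⊗[k] H) ⊗[k] H) →ₗ[k] B :=
    LinearMap.mul' k B ∘ₗ TensorProduct.map
      (LinearMap.mul' k B ∘ₗ TensorProduct.map (TensorProduct.lift σ) (mulAct act b) ∘ₗ
        (TensorProduct.tensorTensorTensorComm k H H H H).toLinearMap) (TensorProduct.lift σi) ∘ₗ
      (TensorProduct.tensorTensorTensorComm k (H ⊗[k] H) H (H ⊗[k] H) H).toLinearMap
  have e : (toConv (TensorProduct.lift σ) * toConv (mulAct act b) *
      toConv (TensorProduct.lift σi)) (x ⊗ₜ[k] y) = L (Δ3 k H x ⊗ₜ[k] Δ3 k H y) := by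
    rw [LinearMap.convMul_apply, TensorProduct.comul_tmul, Δ3_apply_s6, Δ3_apply_s6]
    induction comul (R := k) x with
    | zero => simp
    | add x y hx hy => simp only [TensorProduct.add_tmul, map_add, hx, hy]
    | tmul p q =>
      induction comul (R := k) y with
      | zero => simp
      | add x y hx hy => simp only [TensorProduct.tmul_add, map_add, hx, hy]
      | tmul r s =>
        simp [L, LinearMap.convMul_def, TensorProduct.comul_tmul,
          TensorProduct.AlgebraTensorModule.tensorTensorTensorComm_eq]
  rw [e, hx, hy]
  rw [Finset.sum_comm]
  simp [L, TensorProduct.sum_tmul, TensorProduct.tmul_sum]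

/-- For a datum of associative type, `σ⁻¹` commutes with `x ⊗ y ↦ (xy) ▷ b` under convolution. -/
lemma conv_comm (hcd : CocycleDatum k H B act σ σi)
    (hassoc : ∀ (h g : H) (b : B), act h (act g b) = act (h * g) b) (b : B) :
    toConv (TensorProduct.lift σi) * toConv (mulAct act b)
      = toConv (mulAct act b) * toConv (TensorProduct.lift σi) := by
  conv_lhs => rw [← conv_conj hcd hassoc b]
  rw [mul_assoc (toConv (TensorProduct.lift σ)), ← mul_assoc, conv_eq_one hcd.conv_right, one_mul]

/-- The linear map `x ⊗ y ⊗ z ⊗ w ↦ σ⁻¹(S(y), z) ((S(x) w) ▷ b)`. -/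
def sandwichAct (act : H →ₗ[k] B →ₗ[k] B) (σi : H →ₗ[k] H →ₗ[k] B) (b : B) :
    ((H ⊗[k] H) ⊗[k] H) ⊗[k] H →ₗ[k] B :=
  LinearMap.mul' k B ∘ₗ TensorProduct.map
    (TensorProduct.lift σi ∘ₗ (HopfAlgebra.antipode k).rTensor H)
    (mulAct act b ∘ₗ (HopfAlgebra.antipode k).rTensor H) ∘ₗ sandwich k H

@[simp]
lemma sandwichAct_tmul (b : B) (x y z w : H) :
    sandwichAct act σi b (((x ⊗ₜ[k] y) ⊗ₜ[k] z) ⊗ₜ[k] w)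
      = σi (HopfAlgebra.antipode k y) z * act (HopfAlgebra.antipode k x * w) b := by
  simp [sandwichAct]

/-- `σ⁻¹(S(h₍₂₎), h₍₃₎) ((S(h₍₁₎) h₍₄₎) ▷ b) = b σ⁻¹(S(h₍₁₎), h₍₂₎)`: the commutation of `σ⁻¹`
with `x ⊗ y ↦ (xy) ▷ b`, evaluated at `S(h₍₁₎) ⊗ h₍₂₎`. -/
lemma sandwichAct_Δ4 (hcd : CocycleDatum k H B act σ σi)
    (hassoc : ∀ (h g : H) (b : B), act h (act g b) = act (h * g) b) (b : B) (h : H) :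
    sandwichAct act σi b (Δ4 k H h)
      = b * TensorProduct.lift σi ((HopfAlgebra.antipode k).rTensor H (comul h)) := by
  have key := congrArg (fun f : WithConv (H ⊗[k] H →ₗ[k] B) =>
    f ((HopfAlgebra.antipode k).rTensor H (comul h))) (conv_comm hcd hassoc b)
  simp only [LinearMap.convMul_apply, comul_antipode_tmul, TensorProduct.map_map] at key
  have e : mulAct act b ∘ₗ (HopfAlgebra.antipode k).rTensor H
      = act.flip b ∘ₗ antipodeMul k H := by
    ext x y; simp
  refine key.trans ?_
  rw [e, ← LinearMap.comp_id (TensorProduct.lift σi ∘ₗ _), TensorProduct.map_comp,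
    LinearMap.comp_apply]
  change LinearMap.mul' k B (TensorProduct.map _ _
    ((antipodeMul k H).rTensor (H ⊗[k] H) (sandwich k H (Δ4 k H h)))) = _
  rw [sandwich_collapse]
  simp [hcd.one_act]

/-- Replacing `b` by `S(c) ▷ b` multiplies the last leg on the right by `S(c)`. -/
lemma sandwichAct_act (hassoc : ∀ (h g : H) (b : B), act h (act g b) = act (h * g) b) (b : B)
    (x : ((H ⊗[k] H) ⊗[k] H) ⊗[k] H) (c : H) :
    sandwichAct act σi (act (HopfAlgebra.antipode k c) b) x
      = sandwichAct act σi b ((LinearMap.mulRight k (HopfAlgebra.antipode k c)).lTensor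
          ((H ⊗[k] H) ⊗[k] H) x) := by
  have e : sandwichAct act σi (act (HopfAlgebra.antipode k c) b)
      = sandwichAct act σi b ∘ₗ (LinearMap.mulRight k (HopfAlgebra.antipode k c)).lTensor
          ((H ⊗[k] H) ⊗[k] H) := by
    ext x y z w
    simp [hassoc, mul_assoc]
  rw [e, LinearMap.comp_apply]

end Aux

section Statements

variable {k : Type*} [Field k]
variable {H : Type*} [Ring H] [HopfAlgebra k H]
variable {B : Type*} [Ring B] [Algebra k B]

local notation "𝑺" => HopfAlgebra.antipode (R := k)

/-- Lemma 2.5: for a cocycle datum of associative type,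
`(S(h₍₃₎)▷b)σ⁻¹(S(h₍₁₎),h₍₂₎) = σ⁻¹(S(h₍₂₎),h₍₃₎)(S(h₍₁₎)▷b)`. -/
theorem statement6 (act : H →ₗ[k] B →ₗ[k] B) (σ σi : H →ₗ[k] H →ₗ[k] B)
    (hcd : CocycleDatum k H B act σ σi)
    (hassoc : ∀ (h g : H) (b : B), act h (act g b) = act (h * g) b) :
    ∀ (h : H) (b : B) {n : ℕ} (h1 h2 h3 : Fin n → H), IsRep3 k H h h1 h2 h3 →
      ∑ i, act (𝑺 (h3 i)) b * σi (𝑺 (h1 i)) (h2 i)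
        = ∑ i, σi (𝑺 (h2 i)) (h3 i) * act (𝑺 (h1 i)) b := by
  intro h b n h1 h2 h3 hrep
  unfold IsRep3 at hrep
  -- `N` sends `u ⊗ v` to `σ⁻¹(S(u₍₂₎), u₍₃₎) ((S(u₍₁₎) v) ▷ b)`
  let N : H ⊗[k] H →ₗ[k] B := sandwichAct act σi b ∘ₗ (Δ3 k H).rTensor H
  have hN : N ((mulAntipode k H).lTensor H (TensorProduct.assoc k H H H (Δ3 k H h)))
      = ∑ i, σi (𝑺 (h2 i)) (h3 i) * act (𝑺 (h1 i)) b := by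
    rw [collapse k _ (mulAntipode_comul k)]
    simp [N, hrep, TensorProduct.sum_tmul]
  -- `M` sends `x ⊗ y ⊗ z` to `(S(z) ▷ b) σ⁻¹(S(x), y)`
  let M : (H ⊗[k] H) ⊗[k] H →ₗ[k] B :=
    LinearMap.mul' k B ∘ₗ TensorProduct.map (act.flip b ∘ₗ 𝑺)
      (TensorProduct.lift σi ∘ₗ (HopfAlgebra.antipode k).rTensor H) ∘ₗ
      (TensorProduct.comm k (H ⊗[k] H) H).toLinearMap
  have hM : M (Δ3 k H h) = ∑ i, act (𝑺 (h3 i)) b * σi (𝑺 (h1 i)) (h2 i) := by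
    simp [M, hrep]
  rw [← hN, ← hM]
  rw [Δ3_apply_s6]
  induction comul (R := k) h with
  | zero => simp
  | add x y hx hy => simp only [map_add, hx, hy]
  | tmul u c =>
    have hu : M (comul u ⊗ₜ[k] c) = sandwichAct act σi (act (𝑺 c) b) (Δ4 k H u) := by
      rw [sandwichAct_Δ4 hcd hassoc]
      simp [M]
    rw [LinearMap.rTensor_tmul, hu, sandwichAct_act hassoc, Δ4_apply]
    induction comul (R := k) u with
    | zero => simp
    | add x y hx hy => simp only [TensorProduct.add_tmul, map_add, hx, hy]
    | tmul p q => simp [N]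

end Statements
end
end

section
/- Let (▷,σ) be a cocycle datum of associative type for a Hopf algebra H on an algebra B, and let u, v : H → B be convolution-invertible unital maps such that u satisfies u⁻¹(h_{(1)})(h_{(2)}▷(u⁻¹(g_{(1)})(g_{(2)}▷b)u(g_{(3)})))u(h_{(3)}) = u⁻¹(h_{(1)}g_{(1)})((h_{(2)}g_{(2)})▷b)u(h_{(3)}g_{(3)}) for all h,g ∈ H, b ∈ B, and v satisfies the analogous condition with respect to the gauge-transformed action ▷^u. Then the convolution product u*v, (u*v)(h) = u(h_{(1)})v(h_{(2)}), satisfies the condition with respect to ▷, and moreover (▷^u)^v = ▷^{u*v} and (σ^u)^v = σ^{u*v}. -/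
/-!
Everything is an identity in convolution algebras. In `Hom(H, B)`, write `α_b` for the map
`h ↦ h ▷ b`. The gauge-transformed action is `α_b ↦ u⁻¹ * α_b * u`, so
`(▷^u)^v = ▷^{u*v}` is associativity together with `(u*v)⁻¹ = v⁻¹ * u⁻¹` (`gauge_eq`).
The condition on `u*v` then follows from the condition on `v`: its left side only involves
`(▷^u)^v`, and its right side is the gauge-transformed action evaluated at the product `hg`,
because pulling back along the multiplication of `H` is multiplicative (`convMulArg_mul`).

For the cocycles, the convolution algebra `Hom(H ⊗ H, B)` is used in its curried form
`Hom(H, Hom(H, B))`. Write `A_f` for `(h, g) ↦ h ▷ f(g)` and `M_f` for `(h, g) ↦ f(hg)`; both are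
multiplicative in `f`, the first because `▷` is a measuring (`convAct_mul`). Letting `Hom(H, B)`
act through the first argument, `σ^u = u⁻¹ * A_{u⁻¹} * σ * M_u`, hence
`(σ^u)^v = v⁻¹ * (u⁻¹ * A_{v⁻¹} * u) * (u⁻¹ * A_{u⁻¹} * σ * M_u) * M_v`
`= (u*v)⁻¹ * A_{(u*v)⁻¹} * σ * M_{u*v} = σ^{u*v}`.

The lemmas `conv_apply_rep2`, `conv_apply_rep3` and `conv_apply_rep4` translate between Sweedler
sums over chosen representatives of the legs and iterated convolution products.
-/

open scoped TensorProduct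
open Coalgebra

noncomputable section

section Statements

variable {k : Type*} [Field k]
variable {H : Type*} [Ring H] [HopfAlgebra k H]
variable {B : Type*} [Ring B] [Algebra k B]

open WithConv

/-! ### Tensors as finite sums of pure tensors -/

section TensorReps

variable {M N P Q : Type*} [AddCommGroup M] [AddCommGroup N] [AddCommGroup P] [AddCommGroup Q]
  [Module k M] [Module k N] [Module k P] [Module k Q]

lemma exists_tensor_rep2 (t : M ⊗[k] N) :
    ∃ (n : ℕ) (a : Fin n → M) (b : Fin n → N), t = ∑ i, a i ⊗ₜ[k] b i := by
  induction t using TensorProduct.induction_on with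
  | zero => exact ⟨0, Fin.elim0, Fin.elim0, by simp⟩
  | tmul x y => exact ⟨1, fun _ => x, fun _ => y, by simp⟩
  | add s t hs ht =>
    obtain ⟨n, a, b, rfl⟩ := hs
    obtain ⟨m, a', b', rfl⟩ := ht
    exact ⟨n + m, Fin.append a a', Fin.append b b', by simp [Fin.sum_univ_add]⟩

lemma exists_tensor_rep3 (t : (M ⊗[k] N) ⊗[k] P) :
    ∃ (n : ℕ) (a : Fin n → M) (b : Fin n → N) (c : Fin n → P),
      t = ∑ i, (a i ⊗ₜ[k] b i) ⊗ₜ[k] c i := by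
  induction t using TensorProduct.induction_on with
  | zero => exact ⟨0, Fin.elim0, Fin.elim0, Fin.elim0, by simp⟩
  | tmul x y =>
    obtain ⟨n, a, b, rfl⟩ := exists_tensor_rep2 x
    exact ⟨n, a, b, fun _ => y, by simp [TensorProduct.sum_tmul]⟩
  | add s t hs ht =>
    obtain ⟨n, a, b, c, rfl⟩ := hs
    obtain ⟨m, a', b', c', rfl⟩ := ht
    exact ⟨n + m, Fin.append a a', Fin.append b b', Fin.append c c',
      by simp [Fin.sum_univ_add]⟩

lemma exists_tensor_rep4 (t : ((M ⊗[k] N) ⊗[k] P) ⊗[k] Q) :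
    ∃ (n : ℕ) (a : Fin n → M) (b : Fin n → N) (c : Fin n → P) (d : Fin n → Q),
      t = ∑ i, ((a i ⊗ₜ[k] b i) ⊗ₜ[k] c i) ⊗ₜ[k] d i := by
  induction t using TensorProduct.induction_on with
  | zero => exact ⟨0, Fin.elim0, Fin.elim0, Fin.elim0, Fin.elim0, by simp⟩
  | tmul x y =>
    obtain ⟨n, a, b, c, rfl⟩ := exists_tensor_rep3 x
    exact ⟨n, a, b, c, fun _ => y, by simp [TensorProduct.sum_tmul]⟩
  | add s t hs ht =>
    obtain ⟨n, a, b, c, d, rfl⟩ := hs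
    obtain ⟨m, a', b', c', d', rfl⟩ := ht
    exact ⟨n + m, Fin.append a a', Fin.append b b', Fin.append c c', Fin.append d d',
      by simp [Fin.sum_univ_add]⟩

end TensorReps

/-! ### Sweedler sums as convolution products -/

section ConvolutionSums

variable {A : Type*} [Ring A] [Algebra k A]

lemma conv_apply_rep2 (f g : WithConv (H →ₗ[k] A)) {h : H} {n : ℕ} {h1 h2 : Fin n → H}
    (hr : IsRep2 k H h h1 h2) : (f * g) h = ∑ i, f (h1 i) * g (h2 i) := by
  unfold IsRep2 at hr
  simp [hr]

lemma conv_apply_rep3 (f g p : WithConv (H →ₗ[k] A)) {h : H} {n : ℕ} {h1 h2 h3 : Fin n → H}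
    (hr : IsRep3 k H h h1 h2 h3) : (f * g * p) h = ∑ i, f (h1 i) * g (h2 i) * p (h3 i) := by
  have key : ∀ t : H ⊗[k] H, TensorProduct.map (f * g).ofConv p.ofConv t
      = TensorProduct.map (LinearMap.mul' k A ∘ₗ TensorProduct.map f.ofConv g.ofConv) p.ofConv
          (LinearMap.rTensor H Coalgebra.comul t) := by
    intro t
    induction t using TensorProduct.induction_on with
    | zero => simp
    | tmul x y => simp
    | add s t hs ht => simp only [map_add, hs, ht]
  have hr' : LinearMap.rTensor H Coalgebra.comul (Coalgebra.comul (R := k) h) = _ := hr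
  rw [LinearMap.convMul_apply, key, hr']
  simp

lemma conv_apply_rep4 (f g p q : WithConv (H →ₗ[k] A)) {h : H} {n : ℕ}
    {h1 h2 h3 h4 : Fin n → H} (hr : IsRep4 k H h h1 h2 h3 h4) :
    (f * g * p * q) h = ∑ i, f (h1 i) * g (h2 i) * p (h3 i) * q (h4 i) := by
  have key : ∀ t : H ⊗[k] H, TensorProduct.map (f * g * p).ofConv q.ofConv t
      = TensorProduct.map (LinearMap.mul' k A ∘ₗ TensorProduct.map
          (LinearMap.mul' k A ∘ₗ TensorProduct.map f.ofConv g.ofConv) p.ofConv) q.ofConv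
          (LinearMap.rTensor H (Δ3 k H) t) := by
    intro t
    induction t using TensorProduct.induction_on with
    | zero => simp
    | tmul x y =>
      obtain ⟨m, a, b, c, hx⟩ := exists_tensor_rep3 (Δ3 k H x)
      rw [LinearMap.rTensor_tmul, TensorProduct.map_tmul, conv_apply_rep3 f g p hx, hx]
      simp [TensorProduct.sum_tmul]
    | add s t hs ht => simp only [map_add, hs, ht]
  have hr' : LinearMap.rTensor H (Δ3 k H) (Coalgebra.comul (R := k) h) = _ := hr
  rw [LinearMap.convMul_apply, key, hr']
  simp

end ConvolutionSums

/-! ### The iterated convolution algebra -/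

/-- The bilinear map `β : H × H → B` regarded as the element `g ↦ β(-, g)` of the iterated
convolution algebra `Hom(H, Hom(H, B))`, which is the convolution algebra `Hom(H ⊗ H, B)` in
curried form (second argument outermost). -/
def convCurry (β : H →ₗ[k] H →ₗ[k] B) : WithConv (H →ₗ[k] WithConv (H →ₗ[k] B)) :=
  toConv ((WithConv.linearEquiv k (H →ₗ[k] B)).symm.toLinearMap ∘ₗ β.flip)

@[simp]
lemma convCurry_apply (β : H →ₗ[k] H →ₗ[k] B) (g h : H) : convCurry β g h = β h g := rfl

/-- The element `(h, g) ↦ f (h g)` of the iterated convolution algebra. -/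
def convMulArg (f : WithConv (H →ₗ[k] B)) : WithConv (H →ₗ[k] WithConv (H →ₗ[k] B)) :=
  convCurry ((LinearMap.mul k H).compr₂ f.ofConv)

@[simp]
lemma convMulArg_apply (f : WithConv (H →ₗ[k] B)) (g h : H) : convMulArg f g h = f (h * g) := rfl

/-- The element `(h, g) ↦ h ▷ f(g)` of the iterated convolution algebra. -/
def convAct (act : H →ₗ[k] B →ₗ[k] B) (f : WithConv (H →ₗ[k] B)) :
    WithConv (H →ₗ[k] WithConv (H →ₗ[k] B)) :=
  convCurry (act.compl₂ f.ofConv)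

@[simp]
lemma convAct_apply (act : H →ₗ[k] B →ₗ[k] B) (f : WithConv (H →ₗ[k] B)) (g h : H) :
    convAct act f g h = act h (f g) := rfl

/-- The linear map `h ↦ h ▷ b`, as an element of the convolution algebra. -/
def orbitMap (act : H →ₗ[k] B →ₗ[k] B) (b : B) : WithConv (H →ₗ[k] B) :=
  toConv (act.flip b)

@[simp]
lemma orbitMap_apply (act : H →ₗ[k] B →ₗ[k] B) (b : B) (h : H) : orbitMap act b h = act h b := rfl

lemma conv2_ext {X Y : WithConv (H →ₗ[k] WithConv (H →ₗ[k] B))} (hXY : ∀ g h, X g h = Y g h) :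
    X = Y := by
  apply WithConv.ext
  ext g : 1
  apply WithConv.ext
  ext h
  exact hXY g h

/-- Pulling back along the multiplication is multiplicative for convolution, because the
comultiplication is multiplicative. -/
lemma convMulArg_mul (f f' : WithConv (H →ₗ[k] B)) :
    convMulArg (f * f') = convMulArg f * convMulArg f' := by
  refine conv2_ext fun g h => ?_
  obtain ⟨n, h1, h2, hh⟩ := exists_tensor_rep2 (Coalgebra.comul (R := k) h)
  obtain ⟨m, g1, g2, hg⟩ := exists_tensor_rep2 (Coalgebra.comul (R := k) g)
  rw [conv_apply_rep2 _ _ hg, ofConv_sum, LinearMap.sum_apply, convMulArg_apply]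
  simp_rw [conv_apply_rep2 _ _ hh]
  rw [LinearMap.convMul_apply, Bialgebra.comul_mul, hh, hg, Finset.sum_mul_sum, Finset.sum_comm]
  simp

/-- For a measuring, `f ↦ (h ⊗ g ↦ h ▷ f(g))` is multiplicative for convolution. -/
lemma convAct_mul {act : H →ₗ[k] B →ₗ[k] B} (hact : Measuring k H B act)
    (f f' : WithConv (H →ₗ[k] B)) :
    convAct act (f * f') = convAct act f * convAct act f' := by
  refine conv2_ext fun g h => ?_
  obtain ⟨n, h1, h2, hh⟩ := exists_tensor_rep2 (Coalgebra.comul (R := k) h)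
  obtain ⟨m, g1, g2, hg⟩ := exists_tensor_rep2 (Coalgebra.comul (R := k) g)
  rw [conv_apply_rep2 _ _ hg, ofConv_sum, LinearMap.sum_apply, convAct_apply,
    conv_apply_rep2 _ _ hg, map_sum]
  refine Finset.sum_congr rfl fun j _ => ?_
  rw [conv_apply_rep2 _ _ hh, hact.act_mul h _ _ h1 h2 hh]
  rfl

/-! ### Gauge transformations -/

lemma ConvInv.conv_mul_eq_one {u ui : H →ₗ[k] B} (hu : ConvInv k H B u ui) :
    toConv u * toConv ui = 1 ∧ toConv ui * toConv u = 1 := by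
  constructor <;> apply WithConv.ext <;> ext h <;>
    obtain ⟨n, h1, h2, hh⟩ := exists_tensor_rep2 (Coalgebra.comul (R := k) h) <;>
    rw [conv_apply_rep2 _ _ hh, LinearMap.convOne_apply, Algebra.algebraMap_eq_smul_one]
  · exact (hu h h1 h2 hh).1
  · exact (hu h h1 h2 hh).2

/-- Proposition 2.7 (composition of gauge transformations preserving associative type):
if `u` satisfies the associative-type-preservation condition w.r.t. `▷` and `v` satisfies it
w.r.t. `▷^u`, then `u*v` satisfies it w.r.t. `▷`, and `(▷^u)^v = ▷^{u*v}`,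
`(σ^u)^v = σ^{u*v}`. -/
theorem statement7 (act : H →ₗ[k] B →ₗ[k] B) (σ σi : H →ₗ[k] H →ₗ[k] B)
    (hcd : CocycleDatum k H B act σ σi)
    (hassoc : ∀ (h g : H) (b : B), act h (act g b) = act (h * g) b)
    (u ui v vi : H →ₗ[k] B)
    (hu : ConvInv k H B u ui) (hu1 : u 1 = 1)
    (hv : ConvInv k H B v vi) (hv1 : v 1 = 1)
    -- the gauge-transformed action ▷^u, as a bilinear map
    (actu : H →ₗ[k] B →ₗ[k] B)
    (hactu : ∀ (h : H) (b : B) {n : ℕ} (h1 h2 h3 : Fin n → H), IsRep3 k H h h1 h2 h3 →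
      actu h b = ∑ i, ui (h1 i) * act (h2 i) b * u (h3 i))
    -- the gauge-transformed cocycle σ^u, as a bilinear map
    (σu : H →ₗ[k] H →ₗ[k] B)
    (hσu : ∀ (h g : H) {n m : ℕ} (h1 h2 h3 h4 : Fin n → H) (g1 g2 g3 : Fin m → H),
      IsRep4 k H h h1 h2 h3 h4 → IsRep3 k H g g1 g2 g3 →
      σu h g = ∑ i, ∑ j, ui (h1 i) * act (h2 i) (ui (g1 j)) * σ (h3 i) (g2 j)
          * u (h4 i * g3 j))
    -- the convolution product w = u*v, with its convolution inverse wi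
    (w wi : H →ₗ[k] B)
    (hw : ∀ (h : H) {n : ℕ} (h1 h2 : Fin n → H), IsRep2 k H h h1 h2 →
      w h = ∑ i, u (h1 i) * v (h2 i))
    (hwi : ConvInv k H B w wi)
    -- `u` satisfies the condition of Proposition 2.7 with respect to ▷
    (hucond : ∀ (h g : H) (b : B) {n m : ℕ} (h1 h2 h3 : Fin n → H) (g1 g2 g3 : Fin m → H),
      IsRep3 k H h h1 h2 h3 → IsRep3 k H g g1 g2 g3 →
      ∑ i, ui (h1 i) * act (h2 i) (∑ j, ui (g1 j) * act (g2 j) b * u (g3 j)) * u (h3 i)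
        = ∑ i, ∑ j, ui (h1 i * g1 j) * act (h2 i * g2 j) b * u (h3 i * g3 j))
    -- `v` satisfies the condition of Proposition 2.7 with respect to ▷^u
    (hvcond : ∀ (h g : H) (b : B) {n m : ℕ} (h1 h2 h3 : Fin n → H) (g1 g2 g3 : Fin m → H),
      IsRep3 k H h h1 h2 h3 → IsRep3 k H g g1 g2 g3 →
      ∑ i, vi (h1 i) * actu (h2 i) (∑ j, vi (g1 j) * actu (g2 j) b * v (g3 j)) * v (h3 i)
        = ∑ i, ∑ j, vi (h1 i * g1 j) * actu (h2 i * g2 j) b * v (h3 i * g3 j)) :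
    -- (1)  u*v satisfies the condition with respect to ▷
    (∀ (h g : H) (b : B) {n m : ℕ} (h1 h2 h3 : Fin n → H) (g1 g2 g3 : Fin m → H),
      IsRep3 k H h h1 h2 h3 → IsRep3 k H g g1 g2 g3 →
      ∑ i, wi (h1 i) * act (h2 i) (∑ j, wi (g1 j) * act (g2 j) b * w (g3 j)) * w (h3 i)
        = ∑ i, ∑ j, wi (h1 i * g1 j) * act (h2 i * g2 j) b * w (h3 i * g3 j))
    ∧
    -- (2)  (▷^u)^v = ▷^{u*v}
    (∀ (h : H) (b : B) {n : ℕ} (h1 h2 h3 : Fin n → H), IsRep3 k H h h1 h2 h3 →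
      ∑ i, vi (h1 i) * actu (h2 i) b * v (h3 i)
        = ∑ i, wi (h1 i) * act (h2 i) b * w (h3 i))
    ∧
    -- (3)  (σ^u)^v = σ^{u*v}
    (∀ (h g : H) {n m : ℕ} (h1 h2 h3 h4 : Fin n → H) (g1 g2 g3 : Fin m → H),
      IsRep4 k H h h1 h2 h3 h4 → IsRep3 k H g g1 g2 g3 →
      ∑ i, ∑ j, vi (h1 i) * actu (h2 i) (vi (g1 j)) * σu (h3 i) (g2 j) * v (h4 i * g3 j)
        = ∑ i, ∑ j, wi (h1 i) * act (h2 i) (wi (g1 j)) * σ (h3 i) (g2 j)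
            * w (h4 i * g3 j)) := by
  obtain ⟨huu, hiu⟩ := hu.conv_mul_eq_one
  obtain ⟨hvv, hiv⟩ := hv.conv_mul_eq_one
  obtain ⟨hww, hiw⟩ := hwi.conv_mul_eq_one
  have w_eq : toConv w = toConv u * toConv v := by
    apply WithConv.ext
    ext h
    obtain ⟨n, h1, h2, hh⟩ := exists_tensor_rep2 (Coalgebra.comul (R := k) h)
    rw [conv_apply_rep2 _ _ hh]
    exact hw h h1 h2 hh
  have wi_eq : toConv wi = toConv vi * toConv ui := by
    refine left_inv_eq_right_inv hiw ?_
    rw [w_eq, mul_assoc, ← mul_assoc (toConv v), hvv, one_mul, huu]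
  have actu_eq : ∀ b, orbitMap actu b = toConv ui * orbitMap act b * toConv u := by
    intro b
    apply WithConv.ext
    ext h
    obtain ⟨n, h1, h2, h3, hh⟩ := exists_tensor_rep3 (Δ3 k H h)
    rw [conv_apply_rep3 _ _ _ hh]
    exact hactu h b h1 h2 h3 hh
  have gauge_eq : ∀ b, toConv vi * orbitMap actu b * toConv v
      = toConv wi * orbitMap act b * toConv w := by
    intro b
    rw [actu_eq, w_eq, wi_eq]
    simp only [mul_assoc]
  have part2 : ∀ (h : H) (b : B) {n : ℕ} (h1 h2 h3 : Fin n → H), IsRep3 k H h h1 h2 h3 →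
      ∑ i, vi (h1 i) * actu (h2 i) b * v (h3 i)
        = ∑ i, wi (h1 i) * act (h2 i) b * w (h3 i) := by
    intro h b n h1 h2 h3 hh
    have e := congrArg (fun F : WithConv (H →ₗ[k] B) => F h) (gauge_eq b)
    simp only [conv_apply_rep3 _ _ _ hh] at e
    exact e
  -- A double Sweedler sum over the products `h₍ᵢ₎g₍ᵢ₎` is a single convolution evaluated at `hg`.
  have diag : ∀ (f p q : WithConv (H →ₗ[k] B)) (h g : H) {n m : ℕ} (h1 h2 h3 : Fin n → H)
      (g1 g2 g3 : Fin m → H), IsRep3 k H h h1 h2 h3 → IsRep3 k H g g1 g2 g3 →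
      ∑ i, ∑ j, f (h1 i * g1 j) * p (h2 i * g2 j) * q (h3 i * g3 j) = (f * p * q) (h * g) := by
    intro f p q h g n m h1 h2 h3 g1 g2 g3 hh hg
    rw [← convMulArg_apply, convMulArg_mul, convMulArg_mul, conv_apply_rep3 _ _ _ hg, ofConv_sum,
      LinearMap.sum_apply, Finset.sum_comm]
    refine Finset.sum_congr rfl fun j _ => ?_
    rw [conv_apply_rep3 _ _ _ hh]
    rfl
  have σu_eq : ∀ g, convCurry σu g
      = toConv ui * (convAct act (toConv ui) * convCurry σ * convMulArg (toConv u)) g := by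
    intro g
    apply WithConv.ext
    ext h
    obtain ⟨n, h1, h2, h3, h4, hh⟩ := exists_tensor_rep4 (Δ4 k H h)
    obtain ⟨m, g1, g2, g3, hg⟩ := exists_tensor_rep3 (Δ3 k H g)
    rw [conv_apply_rep3 _ _ _ hg, Finset.mul_sum, ofConv_sum, LinearMap.sum_apply]
    simp_rw [← mul_assoc, conv_apply_rep4 _ _ _ _ hh]
    rw [Finset.sum_comm]
    exact hσu h g h1 h2 h3 h4 g1 g2 g3 hh hg
  refine ⟨?_, part2, ?_⟩
  · intro h g b n m h1 h2 h3 g1 g2 g3 hh hg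
    rw [← part2 g b g1 g2 g3 hg, ← part2 h _ h1 h2 h3 hh, hvcond h g b h1 h2 h3 g1 g2 g3 hh hg]
    refine (diag (toConv vi) (orbitMap actu b) (toConv v) h g h1 h2 h3 g1 g2 g3 hh hg).trans ?_
    rw [gauge_eq]
    exact (diag (toConv wi) (orbitMap act b) (toConv w) h g h1 h2 h3 g1 g2 g3 hh hg).symm
  · intro h g n m h1 h2 h3 h4 g1 g2 g3 hh hg
    -- Each side is a product in `Hom(H, B)` evaluated at `h`, summed over the legs of `g`.
    have lhs : ∑ i, ∑ j, vi (h1 i) * actu (h2 i) (vi (g1 j)) * σu (h3 i) (g2 j) * v (h4 i * g3 j)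
        = (∑ j, toConv vi * orbitMap actu (vi (g1 j)) * convCurry σu (g2 j)
            * convMulArg (toConv v) (g3 j) : WithConv (H →ₗ[k] B)) h := by
      rw [ofConv_sum, LinearMap.sum_apply, Finset.sum_comm]
      refine Finset.sum_congr rfl fun j _ => ?_
      rw [conv_apply_rep4 _ _ _ _ hh]
      rfl
    have rhs : ∑ i, ∑ j, wi (h1 i) * act (h2 i) (wi (g1 j)) * σ (h3 i) (g2 j) * w (h4 i * g3 j)
        = (toConv wi * ∑ j, convAct act (toConv wi) (g1 j) * convCurry σ (g2 j)
            * convMulArg (toConv w) (g3 j) : WithConv (H →ₗ[k] B)) h := by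
      rw [Finset.mul_sum, ofConv_sum, LinearMap.sum_apply, Finset.sum_comm]
      refine Finset.sum_congr rfl fun j _ => ?_
      rw [← mul_assoc, ← mul_assoc, conv_apply_rep4 _ _ _ _ hh]
      rfl
    rw [lhs, rhs, ← conv_apply_rep3 _ _ _ hg, wi_eq, w_eq, convAct_mul hcd.toMeasuring,
      convMulArg_mul]
    congr 2
    have step : ∀ j, toConv vi * orbitMap actu (vi (g1 j)) * convCurry σu (g2 j)
            * convMulArg (toConv v) (g3 j)
        = toConv vi * toConv ui * (convAct act (toConv vi) (g1 j)
            * (convAct act (toConv ui) * convCurry σ * convMulArg (toConv u)) (g2 j)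
            * convMulArg (toConv v) (g3 j)) := by
      intro j
      -- The factors `u` and `u⁻¹` meeting between `▷^u` and `σ^u` cancel.
      rw [actu_eq, σu_eq]
      have e : orbitMap act (vi (g1 j)) = convAct act (toConv vi) (g1 j) := rfl
      rw [e]
      simp only [mul_assoc]
      rw [← mul_assoc (toConv u) (toConv ui), huu, one_mul]
    simp_rw [step]
    rw [← Finset.mul_sum, ← conv_apply_rep3 _ _ _ hg]
    simp only [mul_assoc]

end Statements
end
end
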